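/- Let u₀ be a Schwartz function on ℝ² and τ ≥ 0, and let e^{τL_∞}u₀ denote the value at time τ of the semigroup generated by L_∞ applied to u₀. Then: (i) there is a universal constant C such that for every 0 ≤ m ≤ 2, ‖e^{τL_∞}u₀‖_{L²(m)} ≤ C e^{(1−m/2)τ} ‖u₀‖_{L²(m)}; (ii) there is a universal constant C such that for every 2 ≤ m ≤ 3, ‖e^{τL_∞}u₀ − M(u₀)G‖_{L²(m)} ≤ C e^{−(m−2)τ/2} ‖u₀ − M(u₀)G‖_{L²(m)}; (iii) for every m ≥ 3 there is a constant C = C(m) such that ‖e^{τL_∞}u₀ − M(u₀)G‖_{L²(m)} ≤ C e^{−τ/2} ‖u₀ − M(u₀)G‖_{L²(m)}. Here M(u₀) := ∫_{ℝ²} u₀(X,Y) dX dY and G(X,Y) = (4π)^{-1} e^{−(X²+Y²)/4}. -/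

import Mathlib

open MeasureTheory SchwartzMap
open scoped ENNReal

/-- The Fourier transform `f̂(ξ,η) = ∫ f(X,Y) e^{-i(Xξ + Yη)} dX dY`. -/
noncomputable def ft2 (f : ℝ × ℝ → ℂ) (ξ η : ℝ) : ℂ :=
  ∫ p : ℝ × ℝ, f p * Complex.exp (-Complex.I * ((p.1 * ξ + p.2 * η : ℝ) : ℂ))

/-- The backward characteristic `ξ₀(τ,ξ,η)`. -/
noncomputable def xiBack (τ ξ η : ℝ) : ℝ :=
  (3 * ξ - Real.sqrt 3 * η) / 2 * Real.exp (-τ / 2) +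
    (-ξ + Real.sqrt 3 * η) / 2 * Real.exp (-(3 * τ) / 2)

/-- The backward characteristic `η₀(τ,ξ,η)`. -/
noncomputable def etaBack (τ ξ η : ℝ) : ℝ :=
  (Real.sqrt 3 * ξ - η) / 2 * Real.exp (-τ / 2) +
    (-(Real.sqrt 3) * ξ + 3 * η) / 2 * Real.exp (-(3 * τ) / 2)

/-- The phase `Φ(τ,ξ,η)`. -/
noncomputable def phiFun (τ ξ η : ℝ) : ℝ :=
  -(1 - Real.exp (-τ)) ^ 3 * ξ ^ 2 -
    2 * Real.sqrt 3 * Real.exp (-τ) * (1 - Real.exp (-τ)) ^ 2 * ξ * η -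
    (1 - Real.exp (-τ)) * (1 + 3 * Real.exp (-2 * τ)) * η ^ 2

/-- The semigroup `e^{τ L_∞} u₀`: the function whose Fourier transform is
`e^{Φ(τ,ξ,η)} û₀(ξ₀(τ,ξ,η), η₀(τ,ξ,η))`, realized by the inverse Fourier integral. -/
noncomputable def semigroupLinfty (τ : ℝ) (u₀ : 𝓢(ℝ × ℝ, ℝ)) : ℝ × ℝ → ℂ :=
  fun P => (((2 * Real.pi) ^ (-2 : ℤ) : ℝ) : ℂ) *
    ∫ w : ℝ × ℝ,
      ((Real.exp (phiFun τ w.1 w.2) : ℝ) : ℂ) *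
        ft2 (fun p => (u₀ p : ℂ)) (xiBack τ w.1 w.2) (etaBack τ w.1 w.2) *
        Complex.exp (Complex.I * ((P.1 * w.1 + P.2 * w.2 : ℝ) : ℂ))

/-- The weighted norm `‖f‖_{L²(m)} = ‖⟨X,Y⟩^m f‖_{L²(ℝ²)}`, `⟨X,Y⟩ = (1+X²+Y²)^{1/2}`. -/
noncomputable def wnorm {E : Type*} [NormedAddCommGroup E] (m : ℝ) (f : ℝ × ℝ → E) : ℝ≥0∞ :=
  eLpNorm (fun p => (1 + p.1 ^ 2 + p.2 ^ 2) ^ (m / 2) * ‖f p‖) 2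

/-- The Gaussian `G(X,Y) = (4π)⁻¹ e^{-(X²+Y²)/4}`. -/
noncomputable def gauss2 (P : ℝ × ℝ) : ℝ :=
  (4 * Real.pi)⁻¹ * Real.exp (-(P.1 ^ 2 + P.2 ^ 2) / 4)


/-! ### Gaussian Fourier integrals -/

lemma quad_lower {α β γ : ℝ} (hα : 0 < α) (hD : 0 < α * γ - β ^ 2) (x y : ℝ) :
    (α * γ - β ^ 2) / (α + γ) * (x ^ 2 + y ^ 2) ≤ α * x ^ 2 + 2 * β * x * y + γ * y ^ 2 := by
  have hγ : 0 < γ := by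
    by_contra h
    push Not at h
    nlinarith [sq_nonneg β]
  have hs : 0 < α + γ := by linarith
  rw [div_mul_eq_mul_div, div_le_iff₀ hs]
  nlinarith [sq_nonneg (α * x + β * y), sq_nonneg (β * x + γ * y)]

lemma integrable_gauss_prod {c d : ℝ} (hc : 0 < c) (hd : 0 < d) :
    Integrable (fun w : ℝ × ℝ => Real.exp (-c * w.1 ^ 2) * Real.exp (-d * w.2 ^ 2)) :=
  (integrable_exp_neg_mul_sq hc).mul_prod (integrable_exp_neg_mul_sq hd)

lemma integrable_quad {α β γ : ℝ} (hα : 0 < α) (hD : 0 < α * γ - β ^ 2) :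
    Integrable (fun w : ℝ × ℝ =>
      Real.exp (-(α * w.1 ^ 2 + 2 * β * w.1 * w.2 + γ * w.2 ^ 2))) := by
  have hγ : 0 < γ := by
    by_contra h
    push Not at h
    nlinarith [sq_nonneg β]
  have hδ : 0 < (α * γ - β ^ 2) / (α + γ) := by positivity
  refine (integrable_gauss_prod hδ hδ).mono' (by fun_prop) (ae_of_all _ fun w => ?_)
  rw [Real.norm_eq_abs, abs_of_pos (Real.exp_pos _), ← Real.exp_add]
  apply Real.exp_le_exp.2
  have := quad_lower hα hD w.1 w.2
  linarith

lemma gauss_fourier {α β γ : ℝ} (hα : 0 < α) (hD : 0 < α * γ - β ^ 2) (x y : ℝ) :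
    ∫ w : ℝ × ℝ, ((Real.exp (-(α * w.1 ^ 2 + 2 * β * w.1 * w.2 + γ * w.2 ^ 2)) : ℝ) : ℂ) *
        Complex.exp (Complex.I * ((x * w.1 + y * w.2 : ℝ) : ℂ)) =
      ((Real.pi / √(α * γ - β ^ 2) *
        Real.exp (-(γ * x ^ 2 - 2 * β * x * y + α * y ^ 2) / (4 * (α * γ - β ^ 2))) : ℝ) : ℂ) := by
  set D := α * γ - β ^ 2 with hDdef
  have hαc : (α : ℂ) ≠ 0 := by exact_mod_cast hα.ne'
  have hDc : (D : ℂ) ≠ 0 := by exact_mod_cast hD.ne'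
  have hint : Integrable (fun w : ℝ × ℝ =>
      ((Real.exp (-(α * w.1 ^ 2 + 2 * β * w.1 * w.2 + γ * w.2 ^ 2)) : ℝ) : ℂ) *
        Complex.exp (Complex.I * ((x * w.1 + y * w.2 : ℝ) : ℂ))) := by
    refine (integrable_quad hα hD).mono' (by fun_prop) (ae_of_all _ fun w => ?_)
    rw [norm_mul, mul_comm Complex.I, Complex.norm_exp_ofReal_mul_I, mul_one, Complex.norm_real,
      Real.norm_eq_abs, abs_of_pos (Real.exp_pos _)]
  rw [Measure.volume_eq_prod, integral_prod_symm _ hint]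
  have h1 : ∀ η : ℝ, ∫ ξ : ℝ,
      ((Real.exp (-(α * ξ ^ 2 + 2 * β * ξ * η + γ * η ^ 2)) : ℝ) : ℂ) *
        Complex.exp (Complex.I * ((x * ξ + y * η : ℝ) : ℂ)) =
      ((Real.pi : ℂ) / α) ^ (1 / 2 : ℂ) * Complex.exp (((-(D / α) : ℝ) : ℂ) * η ^ 2 +
        (Complex.I * (y - β * x / α)) * η + ((-(x ^ 2 / (4 * α)) : ℝ) : ℂ)) := by
    intro η
    have := integral_cexp_quadratic (b := ((-α : ℝ) : ℂ)) (by simpa using hα)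
      (Complex.I * x - 2 * β * η) (-γ * η ^ 2 + Complex.I * (y * η))
    convert! this using 1
    · congr 1; ext ξ
      rw [Complex.ofReal_exp, ← Complex.exp_add]
      congr 1; push_cast; ring
    · congr 1
      · push_cast; rw [neg_neg]
      · congr 1
        push_cast
        rw [hDdef]; push_cast
        field_simp
        ring_nf
        simp only [Complex.I_sq]
        ring
  simp only [h1]
  rw [integral_const_mul, integral_cexp_quadratic (by simp; positivity)]
  have hp : ∀ r : ℝ, 0 ≤ r → (r : ℂ) ^ (1 / 2 : ℂ) = ((√r : ℝ) : ℂ) := by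
    intro r hr
    rw [Real.sqrt_eq_rpow, Complex.ofReal_cpow hr]; norm_num
  have e1 : ((Real.pi : ℂ) / α) ^ (1 / 2 : ℂ) = ((√(Real.pi / α) : ℝ) : ℂ) := by
    rw [← hp _ (by positivity)]; push_cast; rfl
  have e2 : ((Real.pi : ℂ) / -((-(D / α) : ℝ) : ℂ)) ^ (1 / 2 : ℂ) =
      ((√(Real.pi / (D / α)) : ℝ) : ℂ) := by
    rw [← hp _ (by positivity)]; push_cast; rw [neg_neg]
  rw [e1, e2, ← mul_assoc, ← Complex.ofReal_mul, ← Real.sqrt_mul (by positivity)]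
  have e3 : Real.pi / α * (Real.pi / (D / α)) = (Real.pi / √D) ^ 2 := by
    rw [div_pow, Real.sq_sqrt hD.le]; field_simp
  rw [e3, Real.sqrt_sq (by positivity), Complex.ofReal_mul, Complex.ofReal_exp]
  congr 2
  push_cast
  field_simp
  simp only [mul_pow, Complex.I_sq]
  rw [hDdef]; push_cast
  ring

/-! ### The kernel representation -/

/-- The squared Euclidean length. -/
noncomputable def nq (q : ℝ × ℝ) : ℝ := q.1 ^ 2 + q.2 ^ 2

/-- The weight `1 + X² + Y²`. -/
noncomputable def wt (q : ℝ × ℝ) : ℝ := 1 + q.1 ^ 2 + q.2 ^ 2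

/-- The transpose of the backward characteristic map. -/
noncomputable def Am (τ : ℝ) (p : ℝ × ℝ) : ℝ × ℝ :=
  ((3 * Real.exp (-τ / 2) - Real.exp (-(3 * τ) / 2)) / 2 * p.1 +
      (√3 * Real.exp (-τ / 2) - √3 * Real.exp (-(3 * τ) / 2)) / 2 * p.2,
    (-√3 * Real.exp (-τ / 2) + √3 * Real.exp (-(3 * τ) / 2)) / 2 * p.1 +
      (-Real.exp (-τ / 2) + 3 * Real.exp (-(3 * τ) / 2)) / 2 * p.2)

/-- The quadratic form in the exponent of the kernel. -/
noncomputable def Qf (a : ℝ) (z : ℝ × ℝ) : ℝ :=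
  (1 + 3 * a ^ 2) / (1 - a) ^ 3 * z.1 ^ 2 - 2 * √3 * a / (1 - a) ^ 2 * z.1 * z.2 +
    1 / (1 - a) * z.2 ^ 2

/-- The Gaussian kernel. -/
noncomputable def Kf (a : ℝ) (z : ℝ × ℝ) : ℝ :=
  (4 * Real.pi * (1 - a) ^ 2)⁻¹ * Real.exp (-(Qf a z) / 4)

@[fun_prop]
lemma continuous_Am (τ : ℝ) : Continuous (Am τ) := by unfold Am; fun_prop

@[fun_prop]
lemma continuous_Qf (a : ℝ) : Continuous (Qf a) := by unfold Qf; fun_prop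

@[fun_prop]
lemma continuous_Kf (a : ℝ) : Continuous (Kf a) := by unfold Kf; fun_prop

@[fun_prop]
lemma continuous_nq : Continuous nq := by unfold nq; fun_prop

@[fun_prop]
lemma continuous_wt : Continuous wt := by unfold wt; fun_prop

lemma Kf_nonneg (a : ℝ) (z : ℝ × ℝ) : 0 ≤ Kf a z := by unfold Kf; positivity

lemma phi_kernel {τ : ℝ} (hτ : 0 < τ) (z : ℝ × ℝ) :
    (((2 * Real.pi) ^ (-2 : ℤ) : ℝ) : ℂ) * ∫ w : ℝ × ℝ,
      ((Real.exp (phiFun τ w.1 w.2) : ℝ) : ℂ) *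
        Complex.exp (Complex.I * ((z.1 * w.1 + z.2 * w.2 : ℝ) : ℂ)) =
      ((Kf (Real.exp (-τ)) z : ℝ) : ℂ) := by
  set a := Real.exp (-τ) with ha
  have ha1 : a < 1 := by rw [ha]; simpa using hτ
  have hb : 0 < 1 - a := by linarith
  have h3 : √3 ^ 2 = 3 := Real.sq_sqrt (by norm_num)
  have hD : (1 - a) ^ 3 * ((1 - a) * (1 + 3 * a ^ 2)) - (√3 * a * (1 - a) ^ 2) ^ 2 =
      (1 - a) ^ 4 := by
    rw [mul_pow, mul_pow, h3]; ring
  have key := gauss_fourier (α := (1 - a) ^ 3) (β := √3 * a * (1 - a) ^ 2)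
    (γ := (1 - a) * (1 + 3 * a ^ 2)) (by positivity) (by rw [hD]; positivity) z.1 z.2
  rw [hD] at key
  have hphi : ∀ w : ℝ × ℝ, phiFun τ w.1 w.2 = -((1 - a) ^ 3 * w.1 ^ 2 +
      2 * (√3 * a * (1 - a) ^ 2) * w.1 * w.2 + (1 - a) * (1 + 3 * a ^ 2) * w.2 ^ 2) := by
    intro w
    have : Real.exp (-2 * τ) = a ^ 2 := by rw [ha, ← Real.exp_nat_mul]; congr 1; push_cast; ring
    rw [phiFun, this]; ring
  simp only [hphi]
  rw [key, ← Complex.ofReal_mul]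
  congr 1
  have hs : √((1 - a) ^ 4) = (1 - a) ^ 2 := by
    rw [show (1 - a) ^ 4 = ((1 - a) ^ 2) ^ 2 by ring, Real.sqrt_sq (by positivity)]
  rw [hs, Kf, Qf, ← mul_assoc]
  congr 1
  · rw [zpow_neg]; norm_cast; field_simp; norm_num
  · congr 1; field_simp

lemma integrable_phi {τ : ℝ} (hτ : 0 < τ) :
    Integrable (fun w : ℝ × ℝ => Real.exp (phiFun τ w.1 w.2)) := by
  set a := Real.exp (-τ) with ha
  have ha1 : a < 1 := by rw [ha]; simpa using hτ
  have hb : 0 < 1 - a := by linarith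
  have h3 : √3 ^ 2 = 3 := Real.sq_sqrt (by norm_num)
  have hD : (1 - a) ^ 3 * ((1 - a) * (1 + 3 * a ^ 2)) - (√3 * a * (1 - a) ^ 2) ^ 2 =
      (1 - a) ^ 4 := by
    rw [mul_pow, mul_pow, h3]; ring
  have key := integrable_quad (α := (1 - a) ^ 3) (β := √3 * a * (1 - a) ^ 2)
    (γ := (1 - a) * (1 + 3 * a ^ 2)) (by positivity) (by rw [hD]; positivity)
  refine key.congr (ae_of_all _ fun w => ?_)
  have : Real.exp (-2 * τ) = a ^ 2 := by rw [ha, ← Real.exp_nat_mul]; congr 1; push_cast; ring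
  simp only [phiFun, this, ← ha]
  congr 1; ring

lemma pairing_Am (τ : ℝ) (p w : ℝ × ℝ) :
    p.1 * xiBack τ w.1 w.2 + p.2 * etaBack τ w.1 w.2 =
      (Am τ p).1 * w.1 + (Am τ p).2 * w.2 := by
  simp only [xiBack, etaBack, Am]; ring

lemma repr_kernel {τ : ℝ} (hτ : 0 < τ) (u : ℝ × ℝ → ℝ) (hu : Integrable u) (P : ℝ × ℝ) :
    (((2 * Real.pi) ^ (-2 : ℤ) : ℝ) : ℂ) *
    ∫ w : ℝ × ℝ,
      ((Real.exp (phiFun τ w.1 w.2) : ℝ) : ℂ) *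
        ft2 (fun p => (u p : ℂ)) (xiBack τ w.1 w.2) (etaBack τ w.1 w.2) *
        Complex.exp (Complex.I * ((P.1 * w.1 + P.2 * w.2 : ℝ) : ℂ)) =
      ((∫ p : ℝ × ℝ, Kf (Real.exp (-τ)) (P - Am τ p) * u p : ℝ) : ℂ) := by
  have hF : ∀ w : ℝ × ℝ, ((Real.exp (phiFun τ w.1 w.2) : ℝ) : ℂ) *
        ft2 (fun p => (u p : ℂ)) (xiBack τ w.1 w.2) (etaBack τ w.1 w.2) *
        Complex.exp (Complex.I * ((P.1 * w.1 + P.2 * w.2 : ℝ) : ℂ)) =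
      ∫ p : ℝ × ℝ, (u p : ℂ) * (((Real.exp (phiFun τ w.1 w.2) : ℝ) : ℂ) *
        Complex.exp (Complex.I * (((P - Am τ p).1 * w.1 + (P - Am τ p).2 * w.2 : ℝ) : ℂ))) := by
    intro w
    rw [ft2, ← integral_const_mul, ← integral_mul_const]
    congr 1; ext p
    rw [pairing_Am]
    have : Complex.exp (Complex.I * (((P - Am τ p).1 * w.1 + (P - Am τ p).2 * w.2 : ℝ) : ℂ)) =
      Complex.exp (-Complex.I * (((Am τ p).1 * w.1 + (Am τ p).2 * w.2 : ℝ) : ℂ)) *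
      Complex.exp (Complex.I * ((P.1 * w.1 + P.2 * w.2 : ℝ) : ℂ)) := by
      rw [← Complex.exp_add]; congr 1
      simp only [Prod.fst_sub, Prod.snd_sub]; push_cast; ring
    rw [this]; ring
  simp only [hF]
  have hint : Integrable (fun z : (ℝ × ℝ) × (ℝ × ℝ) => (u z.2 : ℂ) *
      (((Real.exp (phiFun τ z.1.1 z.1.2) : ℝ) : ℂ) *
        Complex.exp (Complex.I *
          (((P - Am τ z.2).1 * z.1.1 + (P - Am τ z.2).2 * z.1.2 : ℝ) : ℂ))))
      ((volume : Measure (ℝ × ℝ)).prod volume) := by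
    have h0 := (integrable_phi hτ).mul_prod hu
    refine h0.norm.mono' ?_ (ae_of_all _ fun z => ?_)
    · have h1 : AEStronglyMeasurable (fun z : (ℝ × ℝ) × (ℝ × ℝ) => (u z.2 : ℂ))
        ((volume : Measure (ℝ × ℝ)).prod volume) :=
        Complex.continuous_ofReal.comp_aestronglyMeasurable hu.1.comp_snd
      refine h1.mul (Continuous.aestronglyMeasurable ?_)
      unfold phiFun
      fun_prop
    · rw [norm_mul, norm_mul, mul_comm Complex.I, Complex.norm_exp_ofReal_mul_I, mul_one,
        Complex.norm_real, Complex.norm_real, norm_mul, mul_comm]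
  rw [integral_integral_swap hint]
  rw [← integral_const_mul, ← integral_complex_ofReal]
  congr 1; ext p
  rw [integral_const_mul, mul_left_comm, phi_kernel hτ]
  push_cast; ring

lemma integrable_gauss2 : Integrable gauss2 := by
  have h := (integrable_gauss_prod (c := 1 / 4) (d := 1 / 4) (by norm_num)
    (by norm_num)).const_mul (4 * Real.pi)⁻¹
  refine h.congr (ae_of_all _ fun w => ?_)
  simp only [gauss2, ← Real.exp_add]
  congr 2; ring

lemma ft2_gauss2 (ξ η : ℝ) :
    ft2 (fun p => (gauss2 p : ℂ)) ξ η = ((Real.exp (-(ξ ^ 2 + η ^ 2)) : ℝ) : ℂ) := by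
  have key := gauss_fourier (α := 1 / 4) (β := 0) (γ := 1 / 4) (by norm_num) (by norm_num)
    (-ξ) (-η)
  have h : ft2 (fun p => (gauss2 p : ℂ)) ξ η = (((4 * Real.pi)⁻¹ : ℝ) : ℂ) *
    ∫ w : ℝ × ℝ, ((Real.exp (-(1 / 4 * w.1 ^ 2 + 2 * 0 * w.1 * w.2 + 1 / 4 * w.2 ^ 2)) : ℝ) : ℂ) *
        Complex.exp (Complex.I * ((-ξ * w.1 + -η * w.2 : ℝ) : ℂ)) := by
    rw [ft2, ← integral_const_mul]
    congr 1; ext p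
    rw [gauss2, Complex.ofReal_mul, mul_assoc]
    congr 2
    · congr 2; ring
    · congr 1; push_cast; ring
  rw [h, key, ← Complex.ofReal_mul]
  congr 1
  have : √(1 / 4 * (1 / 4) - 0 ^ 2 : ℝ) = 1 / 4 := by
    rw [show (1 / 4 * (1 / 4) - 0 ^ 2 : ℝ) = (1 / 4) ^ 2 by norm_num]
    exact Real.sqrt_sq (by norm_num)
  rw [this, ← mul_assoc]
  have e : (4 * Real.pi)⁻¹ * (Real.pi / (1 / 4)) = 1 := by field_simp
  rw [e, one_mul]; congr 1; ring

lemma kernel_gauss2 {τ : ℝ} (hτ : 0 < τ) (P : ℝ × ℝ) :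
    ∫ p : ℝ × ℝ, Kf (Real.exp (-τ)) (P - Am τ p) * gauss2 p = gauss2 P := by
  have h := repr_kernel hτ gauss2 integrable_gauss2 P
  have key := gauss_fourier (α := 1) (β := 0) (γ := 1) (by norm_num) (by norm_num) P.1 P.2
  apply Complex.ofReal_injective
  rw [← h]
  have h3 : √3 ^ 2 = 3 := Real.sq_sqrt (by norm_num)
  have : ∀ w : ℝ × ℝ, ((Real.exp (phiFun τ w.1 w.2) : ℝ) : ℂ) *
        ft2 (fun p => (gauss2 p : ℂ)) (xiBack τ w.1 w.2) (etaBack τ w.1 w.2) *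
        Complex.exp (Complex.I * ((P.1 * w.1 + P.2 * w.2 : ℝ) : ℂ)) =
      ((Real.exp (-(1 * w.1 ^ 2 + 2 * 0 * w.1 * w.2 + 1 * w.2 ^ 2)) : ℝ) : ℂ) *
        Complex.exp (Complex.I * ((P.1 * w.1 + P.2 * w.2 : ℝ) : ℂ)) := by
    intro w
    rw [ft2_gauss2, ← Complex.ofReal_mul, ← Real.exp_add]
    congr 4
    simp only [phiFun, xiBack, etaBack]
    set e := Real.exp (-τ / 2) with he
    have e1 : Real.exp (-τ) = e ^ 2 := by rw [he, ← Real.exp_nat_mul]; congr 1; push_cast; ring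
    have e2 : Real.exp (-2 * τ) = e ^ 4 := by rw [he, ← Real.exp_nat_mul]; congr 1; push_cast; ring
    have e3 : Real.exp (-(3 * τ) / 2) = e ^ 3 := by
      rw [he, ← Real.exp_nat_mul]; congr 1; push_cast; ring
    rw [e1, e2, e3]
    ring_nf
    simp only [h3]
    ring
  simp only [this]
  rw [key, ← Complex.ofReal_mul]
  congr 1
  rw [gauss2]
  rw [show (1 * 1 - 0 ^ 2 : ℝ) = 1 by norm_num, Real.sqrt_one, ← mul_assoc]
  congr 1
  · rw [zpow_neg]; norm_cast; field_simp; norm_num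
  · congr 1; ring

/-! ### Time zero: Fourier inversion -/

lemma semigroup_zero (u₀ : 𝓢(ℝ × ℝ, ℝ)) (P : ℝ × ℝ) :
    semigroupLinfty 0 u₀ P = ((u₀ P : ℝ) : ℂ) := by
  let g : 𝓢(WithLp 2 (ℝ × ℝ), ℂ) := SchwartzMap.postcompCLM Complex.ofRealCLM
    (SchwartzMap.compCLMOfContinuousLinearEquiv ℝ (WithLp.prodContinuousLinearEquiv 2 ℝ ℝ ℝ) u₀)
  have hg : ∀ x, g x = ((u₀ (WithLp.ofLp x) : ℝ) : ℂ) := fun x => rfl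
  have emb : MeasurableEmbedding (@WithLp.toLp 2 (ℝ × ℝ)) :=
    (WithLp.prodContinuousLinearEquiv 2 ℝ ℝ ℝ).symm.toHomeomorph.measurableEmbedding
  have hF : ∀ w : ℝ × ℝ, FourierTransform.fourier (g : WithLp 2 (ℝ × ℝ) → ℂ) (WithLp.toLp 2 w) =
      ft2 (fun p => (u₀ p : ℂ)) (2 * Real.pi * w.1) (2 * Real.pi * w.2) := by
    intro w
    rw [Real.fourier_eq', ← (WithLp.volume_preserving_toLp ℝ ℝ).integral_comp emb, ft2]
    congr 1; ext p
    rw [hg, smul_eq_mul, mul_comm]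
    congr 2
    simp only [WithLp.prod_inner_apply, Real.inner_apply]
    push_cast; ring
  have hinv := g.continuous.fourierInv_fourier_eq g.integrable
    (by rw [← SchwartzMap.fourier_coe]; exact SchwartzMap.integrable _)
  have hP := congrFun hinv (WithLp.toLp 2 P)
  rw [hg, Real.fourierInv_eq', ← (WithLp.volume_preserving_toLp ℝ ℝ).integral_comp emb] at hP
  simp only [hF] at hP
  have hsc := Measure.integral_comp_smul (volume : Measure (ℝ × ℝ)) (fun w : ℝ × ℝ =>
    ft2 (fun p => (u₀ p : ℂ)) w.1 w.2 *
      Complex.exp (Complex.I * ((P.1 * w.1 + P.2 * w.2 : ℝ) : ℂ))) (2 * Real.pi)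
  have hfr : Module.finrank ℝ (ℝ × ℝ) = 2 := by simp
  rw [hfr, abs_of_pos (by positivity)] at hsc
  rw [← hP, semigroupLinfty]
  have hl : ∀ w : ℝ × ℝ, ((Real.exp (phiFun 0 w.1 w.2) : ℝ) : ℂ) *
        ft2 (fun p => (u₀ p : ℂ)) (xiBack 0 w.1 w.2) (etaBack 0 w.1 w.2) *
        Complex.exp (Complex.I * ((P.1 * w.1 + P.2 * w.2 : ℝ) : ℂ)) =
      ft2 (fun p => (u₀ p : ℂ)) w.1 w.2 *
      Complex.exp (Complex.I * ((P.1 * w.1 + P.2 * w.2 : ℝ) : ℂ)) := by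
    intro w
    have h1 : phiFun 0 w.1 w.2 = 0 := by simp [phiFun]
    have h2 : xiBack 0 w.1 w.2 = w.1 := by simp [xiBack]; ring
    have h3 : etaBack 0 w.1 w.2 = w.2 := by simp [etaBack]; ring
    rw [h1, h2, h3]; simp
  simp only [hl]
  rw [Complex.real_smul] at hsc
  have hz : ((2 * Real.pi) ^ (-2 : ℤ) : ℝ) = ((2 * Real.pi) ^ 2)⁻¹ := by
    rw [zpow_neg]; norm_cast
  rw [hz, ← hsc]
  congr 1; ext w
  rw [smul_eq_mul, mul_comm]
  simp only [Prod.smul_fst, Prod.smul_snd, smul_eq_mul]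
  congr 2
  simp only [WithLp.prod_inner_apply, Real.inner_apply]
  push_cast; ring

/-! ### Pointwise kernel bounds -/

/-- The anisotropic quadratic form dominating the weights. -/
noncomputable def rho (b : ℝ) (z : ℝ × ℝ) : ℝ := z.1 ^ 2 / b ^ 3 + z.2 ^ 2 / b

/-- The comparison Gaussian. -/
noncomputable def Hf (b : ℝ) (z : ℝ × ℝ) : ℝ := (b ^ 2)⁻¹ * Real.exp (-(rho b z) / 40)

@[fun_prop]
lemma continuous_rho (b : ℝ) : Continuous (rho b) := by unfold rho; fun_prop

@[fun_prop]
lemma continuous_Hf (b : ℝ) : Continuous (Hf b) := by unfold Hf; fun_prop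

lemma Hf_nonneg (b : ℝ) (z : ℝ × ℝ) : 0 ≤ Hf b z := by unfold Hf; positivity

lemma nq_nonneg (q : ℝ × ℝ) : 0 ≤ nq q := by unfold nq; positivity

lemma one_le_wt (q : ℝ × ℝ) : 1 ≤ wt q := by unfold wt; nlinarith [sq_nonneg q.1, sq_nonneg q.2]

lemma wt_pos (q : ℝ × ℝ) : 0 < wt q := lt_of_lt_of_le one_pos (one_le_wt q)

lemma Qf_lower {a : ℝ} (h0 : 0 ≤ a) (h1 : a < 1) (z : ℝ × ℝ) :
    rho (1 - a) z / 5 ≤ Qf a z := by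
  have hb : 0 < 1 - a := by linarith
  have h3 : √3 ^ 2 = 3 := Real.sq_sqrt (by norm_num)
  have hs : 0 ≤ √3 := Real.sqrt_nonneg 3
  have key : 0 ≤ (4 / 5 + 3 * a ^ 2) * z.1 ^ 2 - 2 * √3 * a * z.1 * ((1 - a) * z.2) +
      4 / 5 * ((1 - a) * z.2) ^ 2 := by
    set Y := (1 - a) * z.2
    have e : (4 / 5 + 3 * a ^ 2) * z.1 ^ 2 - 2 * √3 * a * z.1 * Y + 4 / 5 * Y ^ 2 =
      4 / 5 * (Y - 5 / 4 * (√3 * a * z.1)) ^ 2 + (4 / 5 - 3 / 4 * a ^ 2) * z.1 ^ 2 := by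
      ring_nf; rw [h3]; ring
    rw [e]
    have : 0 ≤ 4 / 5 - 3 / 4 * a ^ 2 := by nlinarith
    positivity
  have e : Qf a z - rho (1 - a) z / 5 = ((4 / 5 + 3 * a ^ 2) * z.1 ^ 2 -
      2 * √3 * a * z.1 * ((1 - a) * z.2) + 4 / 5 * ((1 - a) * z.2) ^ 2) / (1 - a) ^ 3 := by
    unfold Qf rho
    field_simp
    ring
  have := div_nonneg key (pow_nonneg hb.le 3)
  linarith

lemma wt_le_rho {b : ℝ} (h0 : 0 < b) (h1 : b ≤ 1) (z : ℝ × ℝ) : wt z ≤ 1 + rho b z := by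
  unfold wt rho
  have e1 : z.1 ^ 2 ≤ z.1 ^ 2 / b ^ 3 := by
    rw [le_div_iff₀ (by positivity)]
    exact mul_le_of_le_one_right (sq_nonneg _) (pow_le_one₀ h0.le h1)
  have e2 : z.2 ^ 2 ≤ z.2 ^ 2 / b := by
    rw [le_div_iff₀ (by positivity)]
    exact mul_le_of_le_one_right (sq_nonneg _) h1
  linarith

lemma poly_exp (M : ℝ) : ∃ C : ℝ, 0 < C ∧ ∀ s r : ℝ, 0 ≤ r → s ≤ M →
    (1 + r) ^ s ≤ C * Real.exp (r / 40) := by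
  obtain ⟨N, hN⟩ := exists_nat_ge M
  refine ⟨40 ^ N * N.factorial * Real.exp (1 / 40), by positivity, fun s r hr hs => ?_⟩
  have h1 : (1 + r) ^ s ≤ (1 + r) ^ (N : ℝ) :=
    Real.rpow_le_rpow_of_exponent_le (by linarith) (hs.trans hN)
  rw [Real.rpow_natCast] at h1
  have h2 := Real.pow_div_factorial_le_exp ((1 + r) / 40) (by positivity) N
  rw [div_pow, div_div, div_le_iff₀ (by positivity)] at h2
  refine h1.trans (h2.trans (le_of_eq ?_))
  rw [add_div, Real.exp_add]; ring

lemma K_wt (M : ℝ) : ∃ C : ℝ, 0 < C ∧ ∀ a s : ℝ, 0 ≤ a → a < 1 → 0 ≤ s → s ≤ M → ∀ z,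
    wt z ^ s * Kf a z ≤ C * Hf (1 - a) z := by
  obtain ⟨C, hC, h⟩ := poly_exp M
  refine ⟨C, hC, fun a s h0 h1 hs hM z => ?_⟩
  have hb : 0 < 1 - a := by linarith
  have hr : 0 ≤ rho (1 - a) z := by unfold rho; positivity
  have hw : wt z ^ s ≤ C * Real.exp (rho (1 - a) z / 40) :=
    (Real.rpow_le_rpow (wt_pos z).le (wt_le_rho hb (by linarith) z) hs).trans (h s _ hr hM)
  have hK : Kf a z ≤ ((1 - a) ^ 2)⁻¹ * Real.exp (-(rho (1 - a) z) / 20) := by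
    unfold Kf
    gcongr ?_ * ?_
    · apply inv_anti₀ (by positivity)
      have : 1 ≤ 4 * Real.pi := by linarith [Real.pi_gt_three]
      exact le_mul_of_one_le_left (by positivity) this
    · apply Real.exp_le_exp.2
      have := Qf_lower h0 h1 z
      linarith
  calc wt z ^ s * Kf a z ≤ (C * Real.exp (rho (1 - a) z / 40)) *
        (((1 - a) ^ 2)⁻¹ * Real.exp (-(rho (1 - a) z) / 20)) :=
        mul_le_mul hw hK (Kf_nonneg _ _) (by positivity)
    _ = C * Hf (1 - a) z := by
      unfold Hf
      rw [show -(rho (1 - a) z) / 40 = rho (1 - a) z / 40 + -(rho (1 - a) z) / 20 by ring,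
        Real.exp_add]
      ring

lemma wt_split (P q : ℝ × ℝ) : wt P ≤ 2 * (wt (P - q) + nq q) := by
  simp only [wt, nq, Prod.fst_sub, Prod.snd_sub]
  nlinarith [sq_nonneg (P.1 - 2 * q.1), sq_nonneg (P.2 - 2 * q.2)]

lemma wt_rpow_split {s M : ℝ} (hs : 0 ≤ s) (hM : s ≤ M) (P q : ℝ × ℝ) :
    wt P ^ s ≤ 4 ^ M * (wt (P - q) ^ s + nq q ^ s) := by
  have h4 : (4 : ℝ) ^ s ≤ 4 ^ M := Real.rpow_le_rpow_of_exponent_le (by norm_num) hM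
  have hw := wt_pos (P - q)
  have hn := nq_nonneg q
  have h1 : 0 ≤ wt (P - q) ^ s := Real.rpow_nonneg hw.le _
  have h2 : 0 ≤ nq q ^ s := Real.rpow_nonneg hn _
  have hsp := wt_split P q
  rcases le_total (nq q) (wt (P - q)) with h | h
  · calc wt P ^ s ≤ (4 * wt (P - q)) ^ s :=
          Real.rpow_le_rpow (wt_pos P).le (by linarith) hs
      _ = 4 ^ s * wt (P - q) ^ s := Real.mul_rpow (by norm_num) hw.le
      _ ≤ _ := mul_le_mul h4 (by linarith) h1 (by positivity)
  · calc wt P ^ s ≤ (4 * nq q) ^ s :=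
          Real.rpow_le_rpow (wt_pos P).le (by linarith) hs
      _ = 4 ^ s * nq q ^ s := Real.mul_rpow (by norm_num) hn
      _ ≤ _ := mul_le_mul h4 (by linarith) h2 (by positivity)

lemma kernel_bound1 (M : ℝ) : ∃ C : ℝ, 0 < C ∧ ∀ a s : ℝ, 0 ≤ a → a < 1 → 0 ≤ s → s ≤ M →
    ∀ P q, wt P ^ s * Kf a (P - q) ≤
      C * (Hf (1 - a) (P - q) + nq q ^ s * Hf (1 - a) (P - q)) := by
  obtain ⟨C, hC, h⟩ := K_wt (max M 0)
  refine ⟨4 ^ M * C, by positivity, fun a s h0 h1 hs hM P q => ?_⟩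
  have e1 := h a s h0 h1 hs (hM.trans (le_max_left _ _)) (P - q)
  have e2 := h a 0 h0 h1 le_rfl (le_max_right _ _) (P - q)
  rw [Real.rpow_zero, one_mul] at e2
  have h2 : 0 ≤ nq q ^ s := Real.rpow_nonneg (nq_nonneg q) _
  calc wt P ^ s * Kf a (P - q) ≤ (4 ^ M * (wt (P - q) ^ s + nq q ^ s)) * Kf a (P - q) :=
        mul_le_mul_of_nonneg_right (wt_rpow_split hs hM P q) (Kf_nonneg _ _)
    _ = 4 ^ M * (wt (P - q) ^ s * Kf a (P - q) + nq q ^ s * Kf a (P - q)) := by ring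
    _ ≤ 4 ^ M * (C * Hf (1 - a) (P - q) + nq q ^ s * (C * Hf (1 - a) (P - q))) := by gcongr
    _ = _ := by ring

lemma abs_exp_sub_le (x y : ℝ) :
    |Real.exp x - Real.exp y| ≤ |x - y| * (Real.exp x + Real.exp y) := by
  wlog h : y ≤ x generalizing x y
  · have := this y x (by linarith)
    rw [abs_sub_comm, abs_sub_comm x y, add_comm]; exact this
  rw [abs_of_nonneg (by linarith [Real.exp_le_exp.2 h]), abs_of_nonneg (by linarith)]
  have h1 : Real.exp y = Real.exp x * Real.exp (y - x) := by rw [← Real.exp_add]; congr 1; ring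
  have h2 := Real.add_one_le_exp (y - x)
  have h3 := Real.exp_pos x
  have h4 := Real.exp_pos y
  have : Real.exp x - Real.exp y ≤ (x - y) * Real.exp x := by
    rw [h1]; nlinarith
  nlinarith

lemma Qf_diff {a : ℝ} (h0 : 0 ≤ a) (h1 : a ≤ 1 / 2) (P q : ℝ × ℝ) (hq : nq q ≤ 1) :
    |Qf a (P - q) - Qf a P| ≤ 72 * (√(nq q) * wt P) := by
  have hb : 1 / 2 ≤ 1 - a := by linarith
  have hb0 : 0 < 1 - a := by linarith
  set n := √(nq q) with hn
  have hn0 : 0 ≤ n := Real.sqrt_nonneg _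
  have hn1 : n ≤ 1 := Real.sqrt_le_one.2 hq
  have hu : |q.1| ≤ n := by
    rw [hn]; apply Real.abs_le_sqrt; unfold nq; nlinarith [sq_nonneg q.2]
  have hv : |q.2| ≤ n := by
    rw [hn]; apply Real.abs_le_sqrt; unfold nq; nlinarith [sq_nonneg q.1]
  have hx : |P.1| ≤ wt P := by
    unfold wt; rw [← sq_abs P.1]; nlinarith [sq_nonneg (|P.1| - 1), sq_nonneg P.2, abs_nonneg P.1]
  have hy : |P.2| ≤ wt P := by
    unfold wt; rw [← sq_abs P.2]; nlinarith [sq_nonneg (|P.2| - 1), sq_nonneg P.1, abs_nonneg P.2]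
  have hw := one_le_wt P
  have hprod : ∀ u x : ℝ, |u| ≤ n → |x| ≤ wt P → |u * x| ≤ n * wt P := fun u x h h' => by
    rw [abs_mul]; exact mul_le_mul h h' (abs_nonneg _) hn0
  have hu1 : |q.1| ≤ wt P := hu.trans (hn1.trans hw)
  have hv1 : |q.2| ≤ wt P := hv.trans (hn1.trans hw)
  have c1 : 0 ≤ (1 + 3 * a ^ 2) / (1 - a) ^ 3 ∧ (1 + 3 * a ^ 2) / (1 - a) ^ 3 ≤ 14 := by
    refine ⟨by positivity, ?_⟩
    rw [div_le_iff₀ (by positivity)]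
    have : (1 / 2 : ℝ) ^ 3 ≤ (1 - a) ^ 3 := by gcongr
    nlinarith
  have c2 : 0 ≤ 2 * √3 * a / (1 - a) ^ 2 ∧ 2 * √3 * a / (1 - a) ^ 2 ≤ 8 := by
    refine ⟨by positivity, ?_⟩
    rw [div_le_iff₀ (by positivity)]
    have : (1 / 2 : ℝ) ^ 2 ≤ (1 - a) ^ 2 := by gcongr
    have h3 : √3 ≤ 2 := by rw [Real.sqrt_le_left (by norm_num)]; norm_num
    have : √3 * a ≤ 2 * (1 / 2) := by gcongr
    nlinarith
  have c3 : 0 ≤ 1 / (1 - a) ∧ 1 / (1 - a) ≤ 2 := by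
    refine ⟨by positivity, ?_⟩
    rw [div_le_iff₀ (by positivity)]; linarith
  set k1 := (1 + 3 * a ^ 2) / (1 - a) ^ 3
  set k2 := 2 * √3 * a / (1 - a) ^ 2
  set k3 := 1 / (1 - a)
  have e : Qf a (P - q) - Qf a P = k1 * (q.1 * q.1 - 2 * (q.1 * P.1)) +
      k2 * (q.2 * P.1 + q.1 * P.2 - q.1 * q.2) + k3 * (q.2 * q.2 - 2 * (q.2 * P.2)) := by
    simp only [Qf, Prod.fst_sub, Prod.snd_sub]
    ring
  have b1 : |k1 * (q.1 * q.1 - 2 * (q.1 * P.1))| ≤ 14 * (3 * (n * wt P)) := by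
    rw [abs_mul, abs_of_nonneg c1.1]
    apply mul_le_mul c1.2 _ (abs_nonneg _) (by norm_num)
    have := abs_le.1 (hprod _ _ hu hu1)
    have := abs_le.1 (hprod _ _ hu hx)
    rw [abs_le]; constructor <;> linarith
  have b2 : |k2 * (q.2 * P.1 + q.1 * P.2 - q.1 * q.2)| ≤ 8 * (3 * (n * wt P)) := by
    rw [abs_mul, abs_of_nonneg c2.1]
    apply mul_le_mul c2.2 _ (abs_nonneg _) (by norm_num)
    have := abs_le.1 (hprod _ _ hv hx)
    have := abs_le.1 (hprod _ _ hu hy)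
    have := abs_le.1 (hprod _ _ hu hv1)
    rw [abs_le]; constructor <;> linarith
  have b3 : |k3 * (q.2 * q.2 - 2 * (q.2 * P.2))| ≤ 2 * (3 * (n * wt P)) := by
    rw [abs_mul, abs_of_nonneg c3.1]
    apply mul_le_mul c3.2 _ (abs_nonneg _) (by norm_num)
    have := abs_le.1 (hprod _ _ hv hv1)
    have := abs_le.1 (hprod _ _ hv hy)
    rw [abs_le]; constructor <;> linarith
  rw [e]
  have := abs_add_three (k1 * (q.1 * q.1 - 2 * (q.1 * P.1)))
    (k2 * (q.2 * P.1 + q.1 * P.2 - q.1 * q.2)) (k3 * (q.2 * q.2 - 2 * (q.2 * P.2)))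
  linarith

lemma kernel_bound2 (M : ℝ) : ∃ C : ℝ, 0 < C ∧ ∀ a s t : ℝ, 0 ≤ a → a ≤ 1 / 2 → 0 ≤ s → s ≤ M →
    0 ≤ t → t ≤ 1 / 2 → ∀ P q, wt P ^ s * |Kf a (P - q) - Kf a P| ≤
      C * (nq q ^ t * Hf (1 - a) (P - q) + nq q ^ t * Hf (1 - a) P +
        nq q ^ s * Hf (1 - a) (P - q)) := by
  obtain ⟨C1, hC1, h1⟩ := K_wt (M + 1)
  obtain ⟨C2, hC2, h2⟩ := kernel_bound1 M
  have hC4 : (0 : ℝ) < 18 * 4 ^ (M + 1) * C1 := by positivity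
  refine ⟨18 * 4 ^ (M + 1) * C1 + 18 * C1 + C1 + C2, by positivity,
    fun a s t h0 ha hs hM ht ht' P q => ?_⟩
  have hK1 := Kf_nonneg a (P - q)
  have hK0 := Kf_nonneg a P
  have hH1 := Hf_nonneg (1 - a) (P - q)
  have hH0 := Hf_nonneg (1 - a) P
  have hnt : 0 ≤ nq q ^ t := Real.rpow_nonneg (nq_nonneg q) _
  have hns : 0 ≤ nq q ^ s := Real.rpow_nonneg (nq_nonneg q) _
  have hwP := wt_pos P
  have p1 := mul_nonneg hnt hH1
  have p2 := mul_nonneg hnt hH0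
  have p3 := mul_nonneg hns hH1
  rcases le_total (nq q) 1 with hq | hq
  · -- small shift
    have hn : √(nq q) ≤ nq q ^ t := by
      rw [Real.sqrt_eq_rpow]
      rcases (nq_nonneg q).eq_or_lt with hz | hz
      · rw [← hz, Real.zero_rpow (by norm_num)]; exact Real.rpow_nonneg le_rfl _
      · exact Real.rpow_le_rpow_of_exponent_ge hz hq ht'
    have hd : |Kf a (P - q) - Kf a P| ≤ 18 * (nq q ^ t * wt P) * (Kf a (P - q) + Kf a P) := by
      unfold Kf
      rw [← mul_sub, abs_mul, abs_of_nonneg (by positivity), ← mul_add, mul_left_comm]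
      gcongr
      refine (abs_exp_sub_le _ _).trans ?_
      gcongr
      have := Qf_diff h0 ha P q hq
      have h5 : √(nq q) * wt P ≤ nq q ^ t * wt P := by gcongr
      rw [show -Qf a (P - q) / 4 - -Qf a P / 4 = -((Qf a (P - q) - Qf a P) / 4) by ring, abs_neg,
        abs_div, abs_of_pos (by norm_num : (0 : ℝ) < 4)]
      linarith
    have hws : wt P ^ s * wt P = wt P ^ (s + 1) := by
      rw [Real.rpow_add hwP, Real.rpow_one]
    have k0 := h1 a (s + 1) h0 (by linarith) (by linarith) (by linarith) P
    have k1 := h1 a (s + 1) h0 (by linarith) (by linarith) (by linarith) (P - q)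
    have hw4 : wt P ^ (s + 1) ≤ 4 ^ (M + 1) * wt (P - q) ^ (s + 1) := by
      calc wt P ^ (s + 1) ≤ (4 * wt (P - q)) ^ (s + 1) := by
            refine Real.rpow_le_rpow hwP.le ?_ (by linarith)
            have := wt_split P q
            have := one_le_wt (P - q)
            linarith
        _ = 4 ^ (s + 1) * wt (P - q) ^ (s + 1) := Real.mul_rpow (by norm_num) (wt_pos _).le
        _ ≤ _ := mul_le_mul_of_nonneg_right
            (Real.rpow_le_rpow_of_exponent_le (by norm_num) (by linarith))
            (Real.rpow_nonneg (wt_pos _).le _)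
    calc wt P ^ s * |Kf a (P - q) - Kf a P|
        ≤ wt P ^ s * (18 * (nq q ^ t * wt P) * (Kf a (P - q) + Kf a P)) := by gcongr
      _ = 18 * nq q ^ t * (wt P ^ (s + 1) * Kf a (P - q) + wt P ^ (s + 1) * Kf a P) := by
          rw [← hws]; ring
      _ ≤ 18 * nq q ^ t * ((4 ^ (M + 1) * wt (P - q) ^ (s + 1)) * Kf a (P - q) +
            C1 * Hf (1 - a) P) := by gcongr
      _ = 18 * nq q ^ t * (4 ^ (M + 1) * (wt (P - q) ^ (s + 1) * Kf a (P - q)) +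
            C1 * Hf (1 - a) P) := by ring
      _ ≤ 18 * nq q ^ t * (4 ^ (M + 1) * (C1 * Hf (1 - a) (P - q)) + C1 * Hf (1 - a) P) := by
          gcongr
      _ = 18 * 4 ^ (M + 1) * C1 * (nq q ^ t * Hf (1 - a) (P - q)) +
            18 * C1 * (nq q ^ t * Hf (1 - a) P) := by ring
      _ ≤ _ := by
          have q1 := mul_nonneg hC4.le p2
          have q2 := mul_nonneg hC4.le p3
          have q3 := mul_nonneg hC1.le p1
          have q4 := mul_nonneg hC1.le p2
          have q5 := mul_nonneg hC1.le p3
          have q6 := mul_nonneg hC2.le p1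
          have q7 := mul_nonneg hC2.le p2
          have q8 := mul_nonneg hC2.le p3
          nlinarith
  · have hnt1 : 1 ≤ nq q ^ t := Real.one_le_rpow hq ht
    have k0 := h1 a s h0 (by linarith) hs (by linarith) P
    have k1 := h2 a s h0 (by linarith) hs hM P q
    have hws : 0 ≤ wt P ^ s := Real.rpow_nonneg hwP.le _
    have habs : |Kf a (P - q) - Kf a P| ≤ Kf a (P - q) + Kf a P := by
      rw [abs_le]; constructor <;> linarith
    have r1 : Hf (1 - a) (P - q) ≤ nq q ^ t * Hf (1 - a) (P - q) := le_mul_of_one_le_left hH1 hnt1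
    have r0 : Hf (1 - a) P ≤ nq q ^ t * Hf (1 - a) P := le_mul_of_one_le_left hH0 hnt1
    calc wt P ^ s * |Kf a (P - q) - Kf a P| ≤ wt P ^ s * (Kf a (P - q) + Kf a P) := by gcongr
      _ = wt P ^ s * Kf a (P - q) + wt P ^ s * Kf a P := by ring
      _ ≤ C2 * (Hf (1 - a) (P - q) + nq q ^ s * Hf (1 - a) (P - q)) + C1 * Hf (1 - a) P := by
          gcongr
      _ ≤ C2 * (nq q ^ t * Hf (1 - a) (P - q) + nq q ^ s * Hf (1 - a) (P - q)) +
            C1 * (nq q ^ t * Hf (1 - a) P) := by gcongr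
      _ ≤ _ := by
          have q0 := mul_nonneg hC4.le p1
          have q1 := mul_nonneg hC4.le p2
          have q2 := mul_nonneg hC4.le p3
          have q3 := mul_nonneg hC1.le p1
          have q4 := mul_nonneg hC1.le p2
          have q5 := mul_nonneg hC1.le p3
          have q7 := mul_nonneg hC2.le p2
          nlinarith

/-! ### Integral bounds -/

lemma nq_Am (τ : ℝ) (hτ : 0 ≤ τ) (p : ℝ × ℝ) : nq (Am τ p) ≤ 16 * Real.exp (-τ) * wt p := by
  set e := Real.exp (-τ / 2) with he
  have e1 : Real.exp (-τ) = e ^ 2 := by rw [he, ← Real.exp_nat_mul]; congr 1; push_cast; ring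
  have e3 : Real.exp (-(3 * τ) / 2) = e ^ 3 := by
    rw [he, ← Real.exp_nat_mul]; congr 1; push_cast; ring
  have he0 : 0 < e := Real.exp_pos _
  have he1 : e ≤ 1 := by rw [he]; apply Real.exp_le_one_iff.2; linarith
  have h3 : √3 ^ 2 = 3 := Real.sq_sqrt (by norm_num)
  have key : nq (Am τ p) = 2 * e ^ 2 * (√3 * p.1 + p.2) ^ 2 + 2 * (e ^ 3) ^ 2 * (p.1 + √3 * p.2) ^ 2
      - nq (((3 * e + e ^ 3) / 2 * p.1 + (√3 * e + √3 * e ^ 3) / 2 * p.2,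
        (-√3 * e - √3 * e ^ 3) / 2 * p.1 + (-e - 3 * e ^ 3) / 2 * p.2)) := by
    simp only [nq, Am, e3, ← he]
    ring_nf
    simp only [h3]
    ring
  have h4 := nq_nonneg (((3 * e + e ^ 3) / 2 * p.1 + (√3 * e + √3 * e ^ 3) / 2 * p.2,
        (-√3 * e - √3 * e ^ 3) / 2 * p.1 + (-e - 3 * e ^ 3) / 2 * p.2))
  have h5 : (√3 * p.1 + p.2) ^ 2 ≤ 4 * wt p := by
    unfold wt; nlinarith [sq_nonneg (p.1 - √3 * p.2)]
  have h6 : (p.1 + √3 * p.2) ^ 2 ≤ 4 * wt p := by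
    unfold wt; nlinarith [sq_nonneg (√3 * p.1 - p.2)]
  have h7 : (e ^ 3) ^ 2 ≤ e ^ 2 := by
    have : e ^ 3 ≤ e := by
      calc e ^ 3 ≤ e ^ 1 := pow_le_pow_of_le_one he0.le he1 (by norm_num)
        _ = e := pow_one e
    gcongr
  rw [e1]
  have hw := wt_pos p
  have a1 : 2 * e ^ 2 * (√3 * p.1 + p.2) ^ 2 ≤ 2 * e ^ 2 * (4 * wt p) := by gcongr
  have a2 : 2 * (e ^ 3) ^ 2 * (p.1 + √3 * p.2) ^ 2 ≤ 2 * e ^ 2 * (4 * wt p) := by gcongr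
  linarith

lemma lintegral_comp_Am (τ : ℝ) (F : ℝ × ℝ → ℝ≥0∞) (hF : Measurable F) :
    ∫⁻ p, F (Am τ p) = ENNReal.ofReal (Real.exp (2 * τ)) * ∫⁻ z, F z := by
  let L : (ℝ × ℝ) →ₗ[ℝ] (ℝ × ℝ) := Matrix.toLin (Module.Basis.finTwoProd ℝ)
    (Module.Basis.finTwoProd ℝ)
    !![(3 * Real.exp (-τ / 2) - Real.exp (-(3 * τ) / 2)) / 2,
      (√3 * Real.exp (-τ / 2) - √3 * Real.exp (-(3 * τ) / 2)) / 2;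
      (-√3 * Real.exp (-τ / 2) + √3 * Real.exp (-(3 * τ) / 2)) / 2,
      (-Real.exp (-τ / 2) + 3 * Real.exp (-(3 * τ) / 2)) / 2]
  have hL : ∀ p, L p = Am τ p := fun p => Matrix.toLin_finTwoProd_apply _ _ _ _ p
  have h3 : √3 ^ 2 = 3 := Real.sq_sqrt (by norm_num)
  have hdet : LinearMap.det L = Real.exp (-(2 * τ)) := by
    rw [LinearMap.det_toLin, Matrix.det_fin_two_of]
    have : Real.exp (-(2 * τ)) = Real.exp (-τ / 2) * Real.exp (-(3 * τ) / 2) := by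
      rw [← Real.exp_add]; congr 1; ring
    rw [this]
    ring_nf
    rw [h3]; ring
  have hne : LinearMap.det L ≠ 0 := by rw [hdet]; exact (Real.exp_pos _).ne'
  have hmap := Measure.map_linearMap_addHaar_eq_smul_addHaar (volume : Measure (ℝ × ℝ)) hne
  have hm : Measurable L := by
    have : (L : ℝ × ℝ → ℝ × ℝ) = Am τ := funext hL
    rw [this]; exact (continuous_Am τ).measurable
  have h := lintegral_map (μ := volume) hF hm
  rw [hmap, lintegral_smul_measure, hdet, smul_eq_mul] at h
  simp only [hL] at h
  rw [← h, ← Real.exp_neg, neg_neg, abs_of_pos (Real.exp_pos _)]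

lemma lintegral_Hf {b : ℝ} (hb : 0 < b) :
    ∫⁻ z, ENNReal.ofReal (Hf b z) = ENNReal.ofReal (40 * Real.pi) := by
  have e : ∀ z : ℝ × ℝ, Hf b z = (b ^ 2)⁻¹ * (Real.exp (-(1 / (40 * b ^ 3)) * z.1 ^ 2) *
      Real.exp (-(1 / (40 * b)) * z.2 ^ 2)) := by
    intro z
    rw [Hf, ← Real.exp_add]; congr 2; unfold rho; field_simp; ring
  have hint : Integrable (Hf b) :=
    ((integrable_gauss_prod (c := 1 / (40 * b ^ 3)) (d := 1 / (40 * b)) (by positivity)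
      (by positivity)).const_mul (b ^ 2)⁻¹).congr (ae_of_all _ fun z => (e z).symm)
  rw [← ofReal_integral_eq_lintegral_ofReal hint (ae_of_all _ (Hf_nonneg b))]
  congr 1
  simp only [e]
  rw [integral_const_mul, Measure.volume_eq_prod,
    integral_prod_mul (fun x : ℝ => Real.exp (-(1 / (40 * b ^ 3)) * x ^ 2))
      (fun y : ℝ => Real.exp (-(1 / (40 * b)) * y ^ 2)), integral_gaussian, integral_gaussian,
    ← Real.sqrt_mul (by positivity)]
  have : Real.pi / (1 / (40 * b ^ 3)) * (Real.pi / (1 / (40 * b))) = (40 * Real.pi * b ^ 2) ^ 2 := by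
    field_simp
  rw [this, Real.sqrt_sq (by positivity)]
  field_simp

lemma lintegral_Hf_shift {b : ℝ} (hb : 0 < b) (q : ℝ × ℝ) :
    ∫⁻ P, ENNReal.ofReal (Hf b (P - q)) = ENNReal.ofReal (40 * Real.pi) := by
  rw [lintegral_sub_right_eq_self (fun z => ENNReal.ofReal (Hf b z)) q, lintegral_Hf hb]

lemma lintegral_Hf_Am {b : ℝ} (hb : 0 < b) (τ : ℝ) (P : ℝ × ℝ) :
    ∫⁻ p, ENNReal.ofReal (Hf b (P - Am τ p)) =
      ENNReal.ofReal (Real.exp (2 * τ) * (40 * Real.pi)) := by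
  rw [lintegral_comp_Am τ (fun z => ENNReal.ofReal (Hf b (P - z)))
    (by fun_prop), lintegral_sub_left_eq_self (fun z => ENNReal.ofReal (Hf b z)) P,
    lintegral_Hf hb, ENNReal.ofReal_mul (Real.exp_pos _).le]

lemma exists_J : ∃ J : ℝ, 0 < J ∧
    ∫⁻ p : ℝ × ℝ, ENNReal.ofReal (wt p ^ (-2 : ℝ)) ≤ ENNReal.ofReal J := by
  have h1 : Integrable (fun p : ℝ × ℝ => (1 + p.1 ^ 2)⁻¹ * (1 + p.2 ^ 2)⁻¹) :=
    integrable_inv_one_add_sq.mul_prod integrable_inv_one_add_sq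
  refine ⟨(∫ p : ℝ × ℝ, (1 + p.1 ^ 2)⁻¹ * (1 + p.2 ^ 2)⁻¹) + 1, ?_, ?_⟩
  · have : 0 ≤ ∫ p : ℝ × ℝ, (1 + p.1 ^ 2)⁻¹ * (1 + p.2 ^ 2)⁻¹ :=
      integral_nonneg fun p => by positivity
    linarith
  · refine le_trans (lintegral_mono fun p => ?_) (le_trans (le_of_eq
      (ofReal_integral_eq_lintegral_ofReal h1 (ae_of_all _ fun p => by positivity)).symm)
      (ENNReal.ofReal_le_ofReal (by linarith)))
    apply ENNReal.ofReal_le_ofReal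
    rw [Real.rpow_neg (wt_pos p).le, ← mul_inv]
    apply inv_anti₀ (by positivity)
    rw [Real.rpow_two]
    unfold wt
    nlinarith [sq_nonneg p.1, sq_nonneg p.2, mul_nonneg (sq_nonneg p.1) (sq_nonneg p.2)]

/-! ### Schur test -/

/-- The `L²` norm of a nonnegative function. -/
noncomputable def N2 (F : ℝ × ℝ → ℝ≥0∞) : ℝ≥0∞ := (∫⁻ P, F P ^ (2 : ℝ)) ^ (1 / 2 : ℝ)

lemma N2_mono {F G : ℝ × ℝ → ℝ≥0∞} (h : ∀ P, F P ≤ G P) : N2 F ≤ N2 G := by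
  unfold N2
  gcongr with P
  exact h P

lemma N2_add {F G : ℝ × ℝ → ℝ≥0∞} (hF : Measurable F) (hG : Measurable G) :
    N2 (fun P => F P + G P) ≤ N2 F + N2 G :=
  ENNReal.lintegral_Lp_add_le hF.aemeasurable hG.aemeasurable (by norm_num)

lemma N2_const_mul (c : ℝ≥0∞) {F : ℝ × ℝ → ℝ≥0∞} (hF : Measurable F) :
    N2 (fun P => c * F P) = c * N2 F := by
  unfold N2
  simp only [ENNReal.mul_rpow_of_nonneg _ _ (by norm_num : (0 : ℝ) ≤ 2)]
  rw [lintegral_const_mul _ (by fun_prop), ENNReal.mul_rpow_of_nonneg _ _ (by norm_num),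
    ← ENNReal.rpow_mul]
  norm_num

lemma wnorm_eq {E : Type*} [NormedAddCommGroup E] (m : ℝ) (f : ℝ × ℝ → E) :
    wnorm m f = N2 (fun P => ENNReal.ofReal (wt P ^ (m / 2) * ‖f P‖)) := by
  unfold wnorm N2
  rw [eLpNorm_eq_lintegral_rpow_enorm_toReal (by norm_num) (by norm_num)]
  simp only [ENNReal.toReal_ofNat]
  congr 2; ext P; congr 1
  have : 0 ≤ wt P ^ (m / 2) * ‖f P‖ := mul_nonneg (Real.rpow_nonneg (wt_pos P).le _) (norm_nonneg _)
  exact Real.enorm_of_nonneg this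

lemma schur (k : ℝ × ℝ → ℝ × ℝ → ℝ≥0∞) (hk : Measurable (Function.uncurry k))
    (s g : ℝ × ℝ → ℝ≥0∞) (hs : Measurable s) (hg : Measurable g) (A B R : ℝ)
    (hA0 : 0 ≤ A) (hR : 0 ≤ R)
    (hA : ∀ P, ∫⁻ p, k P p * s p ^ (2 : ℝ) ≤ ENNReal.ofReal A)
    (hB : ∀ p, ∫⁻ P, k P p ≤ ENNReal.ofReal B) (hAB : A * B ≤ R ^ 2) :
    N2 (fun P => ∫⁻ p, k P p * s p * g p) ≤ ENNReal.ofReal R * N2 g := by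
  have hk1 : ∀ P, Measurable (k P) := fun P => hk.comp (measurable_const.prodMk measurable_id)
  have hcs : ∀ P, (∫⁻ p, k P p * s p * g p) ^ (2 : ℝ) ≤
      ENNReal.ofReal A * ∫⁻ p, k P p * g p ^ (2 : ℝ) := by
    intro P
    have h := ENNReal.lintegral_mul_le_Lp_mul_Lq (volume.withDensity (k P))
      (Real.HolderConjugate.two_two) hs.aemeasurable hg.aemeasurable
    rw [lintegral_withDensity_eq_lintegral_mul _ (hk1 P) (hs.mul hg),
      lintegral_withDensity_eq_lintegral_mul _ (hk1 P) (hs.pow_const _),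
      lintegral_withDensity_eq_lintegral_mul _ (hk1 P) (hg.pow_const _)] at h
    simp only [Pi.mul_apply] at h
    calc (∫⁻ p, k P p * s p * g p) ^ (2 : ℝ)
        ≤ ((∫⁻ p, k P p * s p ^ (2 : ℝ)) ^ (1 / 2 : ℝ) *
          (∫⁻ p, k P p * g p ^ (2 : ℝ)) ^ (1 / 2 : ℝ)) ^ (2 : ℝ) := by
          gcongr
          simpa only [mul_assoc] using h
      _ = (∫⁻ p, k P p * s p ^ (2 : ℝ)) * (∫⁻ p, k P p * g p ^ (2 : ℝ)) := by
          rw [ENNReal.mul_rpow_of_nonneg _ _ (by norm_num), ← ENNReal.rpow_mul, ← ENNReal.rpow_mul]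
          norm_num
      _ ≤ _ := by gcongr; exact hA P
  have hmain : ∫⁻ P, (∫⁻ p, k P p * s p * g p) ^ (2 : ℝ) ≤
      ENNReal.ofReal R ^ (2 : ℝ) * ∫⁻ p, g p ^ (2 : ℝ) := by
    have hm : Measurable (Function.uncurry fun P p => k P p * g p ^ (2 : ℝ)) :=
      hk.mul ((hg.comp measurable_snd).pow_const _)
    calc ∫⁻ P, (∫⁻ p, k P p * s p * g p) ^ (2 : ℝ)
        ≤ ∫⁻ P, ENNReal.ofReal A * ∫⁻ p, k P p * g p ^ (2 : ℝ) := lintegral_mono hcs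
      _ = ENNReal.ofReal A * ∫⁻ p, ∫⁻ P, k P p * g p ^ (2 : ℝ) := by
          have hm2 : Measurable fun P => ∫⁻ p, k P p * g p ^ (2 : ℝ) := hm.lintegral_prod_right'
          rw [lintegral_const_mul _ hm2, lintegral_lintegral_swap hm.aemeasurable]
      _ = ENNReal.ofReal A * ∫⁻ p, (∫⁻ P, k P p) * g p ^ (2 : ℝ) := by
          congr 1; congr 1; ext p
          have hk2 : Measurable fun P => k P p := hk.comp (measurable_id.prodMk measurable_const)
          rw [lintegral_mul_const _ hk2]
      _ ≤ ENNReal.ofReal A * ∫⁻ p, ENNReal.ofReal B * g p ^ (2 : ℝ) := by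
          gcongr with p; exact hB p
      _ = ENNReal.ofReal A * ENNReal.ofReal B * ∫⁻ p, g p ^ (2 : ℝ) := by
          rw [lintegral_const_mul _ (hg.pow_const _), mul_assoc]
      _ ≤ _ := by
          gcongr
          rw [← ENNReal.ofReal_mul hA0, ENNReal.ofReal_rpow_of_nonneg hR (by norm_num)]
          apply ENNReal.ofReal_le_ofReal
          rw [Real.rpow_two]; exact hAB
  calc N2 (fun P => ∫⁻ p, k P p * s p * g p)
      ≤ (ENNReal.ofReal R ^ (2 : ℝ) * ∫⁻ p, g p ^ (2 : ℝ)) ^ (1 / 2 : ℝ) := by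
        unfold N2; gcongr
    _ = _ := by
        rw [ENNReal.mul_rpow_of_nonneg _ _ (by norm_num), ← ENNReal.rpow_mul]
        unfold N2; norm_num

lemma Hf_le (b : ℝ) (hb : 0 < b) (z : ℝ × ℝ) : Hf b z ≤ (b ^ 2)⁻¹ := by
  unfold Hf
  apply mul_le_of_le_one_right (by positivity)
  apply Real.exp_le_one_iff.2
  have : 0 ≤ rho b z := by unfold rho; positivity
  linarith

lemma schur_conv {J : ℝ} (hJ0 : 0 < J)
    (hJ : ∫⁻ p : ℝ × ℝ, ENNReal.ofReal (wt p ^ (-2 : ℝ)) ≤ ENNReal.ofReal J)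
    {b τ S1 S2 R : ℝ} (hb : 0 < b) (hS1 : 0 ≤ S1) (hS2 : 0 ≤ S2) (hR : 0 ≤ R)
    (s : ℝ × ℝ → ℝ) (hs : Measurable s) (hs0 : ∀ p, 0 ≤ s p)
    (hsb : ∀ p, s p ^ 2 ≤ S1 + S2 * wt p ^ (-2 : ℝ))
    (hAB : (S1 * (Real.exp (2 * τ) * (40 * Real.pi)) + (b ^ 2)⁻¹ * S2 * J) * (40 * Real.pi) ≤ R ^ 2)
    (g : ℝ × ℝ → ℝ≥0∞) (hg : Measurable g) :
    N2 (fun P => ∫⁻ p, ENNReal.ofReal (Hf b (P - Am τ p)) * ENNReal.ofReal (s p) * g p) ≤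
      ENNReal.ofReal R * N2 g := by
  have hwm : Measurable fun p : ℝ × ℝ => wt p ^ (-2 : ℝ) :=
    (continuous_wt.measurable).pow_const _
  refine schur (fun P p => ENNReal.ofReal (Hf b (P - Am τ p))) ?_ _ g (by fun_prop) hg
    (S1 * (Real.exp (2 * τ) * (40 * Real.pi)) + (b ^ 2)⁻¹ * S2 * J) (40 * Real.pi) R
    (by positivity) hR (fun P => ?_) (fun p => ?_) hAB
  · simp only [Function.uncurry_def]; fun_prop
  · calc ∫⁻ p, ENNReal.ofReal (Hf b (P - Am τ p)) * ENNReal.ofReal (s p) ^ (2 : ℝ)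
        ≤ ∫⁻ p, (ENNReal.ofReal S1 * ENNReal.ofReal (Hf b (P - Am τ p)) +
          ENNReal.ofReal ((b ^ 2)⁻¹ * S2) * ENNReal.ofReal (wt p ^ (-2 : ℝ))) := by
          refine lintegral_mono fun p => ?_
          have hH := Hf_nonneg b (P - Am τ p)
          have hw : 0 ≤ wt p ^ (-2 : ℝ) := Real.rpow_nonneg (wt_pos p).le _
          simp only
          rw [ENNReal.ofReal_rpow_of_nonneg (hs0 p) (by norm_num), ← ENNReal.ofReal_mul hH,
            ← ENNReal.ofReal_mul hS1, ← ENNReal.ofReal_mul (by positivity),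
            ← ENNReal.ofReal_add (by positivity) (by positivity), Real.rpow_two]
          apply ENNReal.ofReal_le_ofReal
          have h1 := mul_le_mul_of_nonneg_left (hsb p) hH
          have h2 := mul_le_mul_of_nonneg_right (Hf_le b hb (P - Am τ p)) (mul_nonneg hS2 hw)
          nlinarith
      _ = ENNReal.ofReal S1 * (∫⁻ p, ENNReal.ofReal (Hf b (P - Am τ p))) +
          ENNReal.ofReal ((b ^ 2)⁻¹ * S2) * ∫⁻ p, ENNReal.ofReal (wt p ^ (-2 : ℝ)) := by
          rw [lintegral_add_left (by fun_prop), lintegral_const_mul _ (by fun_prop),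
            lintegral_const_mul _ (by fun_prop)]
      _ ≤ ENNReal.ofReal S1 * ENNReal.ofReal (Real.exp (2 * τ) * (40 * Real.pi)) +
          ENNReal.ofReal ((b ^ 2)⁻¹ * S2) * ENNReal.ofReal J := by
          rw [lintegral_Hf_Am hb]; gcongr
      _ = _ := by
          rw [← ENNReal.ofReal_mul hS1, ← ENNReal.ofReal_mul (by positivity),
            ← ENNReal.ofReal_add (by positivity) (by positivity)]
  · exact (lintegral_Hf_shift hb _).le

lemma schur_rank {J : ℝ} (hJ0 : 0 < J)
    (hJ : ∫⁻ p : ℝ × ℝ, ENNReal.ofReal (wt p ^ (-2 : ℝ)) ≤ ENNReal.ofReal J)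
    {b S2 R : ℝ} (hb : 0 < b) (hS2 : 0 ≤ S2) (hR : 0 ≤ R)
    (s : ℝ × ℝ → ℝ) (hs : Measurable s) (hs0 : ∀ p, 0 ≤ s p)
    (hsb : ∀ p, s p ^ 2 ≤ S2 * wt p ^ (-2 : ℝ))
    (hAB : ((b ^ 2)⁻¹ * S2 * J) * (40 * Real.pi) ≤ R ^ 2)
    (g : ℝ × ℝ → ℝ≥0∞) (hg : Measurable g) :
    N2 (fun P => ∫⁻ p, ENNReal.ofReal (Hf b P) * ENNReal.ofReal (s p) * g p) ≤
      ENNReal.ofReal R * N2 g := by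
  have hwm : Measurable fun p : ℝ × ℝ => wt p ^ (-2 : ℝ) :=
    (continuous_wt.measurable).pow_const _
  refine schur (fun P p => ENNReal.ofReal (Hf b P)) ?_ _ g (by fun_prop) hg
    ((b ^ 2)⁻¹ * S2 * J) (40 * Real.pi) R
    (by positivity) hR (fun P => ?_) (fun p => ?_) hAB
  · simp only [Function.uncurry_def]; fun_prop
  · calc ∫⁻ p, ENNReal.ofReal (Hf b P) * ENNReal.ofReal (s p) ^ (2 : ℝ)
        ≤ ∫⁻ p, ENNReal.ofReal ((b ^ 2)⁻¹ * S2) * ENNReal.ofReal (wt p ^ (-2 : ℝ)) := by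
          refine lintegral_mono fun p => ?_
          have hH := Hf_nonneg b P
          have hw : 0 ≤ wt p ^ (-2 : ℝ) := Real.rpow_nonneg (wt_pos p).le _
          simp only
          rw [ENNReal.ofReal_rpow_of_nonneg (hs0 p) (by norm_num), ← ENNReal.ofReal_mul hH,
            ← ENNReal.ofReal_mul (by positivity), Real.rpow_two]
          apply ENNReal.ofReal_le_ofReal
          have h1 := mul_le_mul_of_nonneg_left (hsb p) hH
          have h2 := mul_le_mul_of_nonneg_right (Hf_le b hb P) (mul_nonneg hS2 hw)
          nlinarith
      _ = ENNReal.ofReal ((b ^ 2)⁻¹ * S2) * ∫⁻ p, ENNReal.ofReal (wt p ^ (-2 : ℝ)) := by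
          rw [lintegral_const_mul _ (by fun_prop)]
      _ ≤ ENNReal.ofReal ((b ^ 2)⁻¹ * S2) * ENNReal.ofReal J := by gcongr
      _ = _ := by rw [← ENNReal.ofReal_mul (by positivity)]
  · exact (lintegral_Hf hb).le

/-! ### The two main estimates -/

lemma ofReal_mul_abs_integral_le (w : ℝ) (hw : 0 ≤ w) (f : ℝ × ℝ → ℝ) :
    ENNReal.ofReal (w * |∫ p, f p|) ≤ ∫⁻ p, ENNReal.ofReal (w * |f p|) := by
  simp only [ENNReal.ofReal_mul hw, ← Real.enorm_eq_ofReal_abs]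
  rw [lintegral_const_mul' _ _ ENNReal.ofReal_ne_top]
  gcongr
  exact enorm_integral_le_lintegral_enorm _

lemma measurable_term {b τ : ℝ} {s : ℝ × ℝ → ℝ} {g : ℝ × ℝ → ℝ≥0∞} (hs : Measurable s)
    (hg : Measurable g) : Measurable fun P : ℝ × ℝ =>
      ∫⁻ p, ENNReal.ofReal (Hf b (P - Am τ p)) * ENNReal.ofReal (s p) * g p := by
  have : Measurable (Function.uncurry fun P p : ℝ × ℝ =>
      ENNReal.ofReal (Hf b (P - Am τ p)) * ENNReal.ofReal (s p) * g p) := by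
    simp only [Function.uncurry_def]; fun_prop
  exact this.lintegral_prod_right'

lemma measurable_term' {b : ℝ} {s : ℝ × ℝ → ℝ} {g : ℝ × ℝ → ℝ≥0∞} (hs : Measurable s)
    (hg : Measurable g) : Measurable fun P : ℝ × ℝ =>
      ∫⁻ p, ENNReal.ofReal (Hf b P) * ENNReal.ofReal (s p) * g p := by
  have : Measurable (Function.uncurry fun P p : ℝ × ℝ =>
      ENNReal.ofReal (Hf b P) * ENNReal.ofReal (s p) * g p) := by
    simp only [Function.uncurry_def]; fun_prop
  exact this.lintegral_prod_right'

lemma wt_neg_sq (m : ℝ) (p : ℝ × ℝ) : (wt p ^ (-(m / 2))) ^ 2 = wt p ^ (-m) := by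
  rw [← Real.rpow_natCast, ← Real.rpow_mul (wt_pos p).le]; congr 1; push_cast; ring

lemma wt_interp {m τ : ℝ} (h0 : 0 ≤ m) (h2 : m ≤ 2) (p : ℝ × ℝ) :
    wt p ^ (-m) ≤ Real.exp (-m * τ) + Real.exp ((2 - m) * τ) * wt p ^ (-2 : ℝ) := by
  have hw := wt_pos p
  have hp : 0 ≤ wt p ^ (-2 : ℝ) := Real.rpow_nonneg hw.le _
  rcases le_total (wt p) (Real.exp τ) with h | h
  · have h1 : wt p ^ (-m) = wt p ^ (2 - m) * wt p ^ (-2 : ℝ) := by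
      rw [← Real.rpow_add hw]; congr 1; ring
    have h3 : wt p ^ (2 - m) ≤ Real.exp ((2 - m) * τ) := by
      rw [mul_comm, Real.exp_mul]
      exact Real.rpow_le_rpow hw.le h (by linarith)
    rw [h1]
    have := mul_le_mul_of_nonneg_right h3 hp
    have := Real.exp_pos (-m * τ)
    linarith
  · have h3 : wt p ^ (-m) ≤ Real.exp (-m * τ) := by
      rw [mul_comm, Real.exp_mul]
      exact Real.rpow_le_rpow_of_nonpos (Real.exp_pos _) h (by linarith)
    have := mul_nonneg (Real.exp_pos ((2 - m) * τ)).le hp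
    linarith

lemma s2_sq {m M τ : ℝ} (hτ : 0 ≤ τ) (h0 : 0 ≤ m) (hM : m ≤ M) (p : ℝ × ℝ) :
    (nq (Am τ p) ^ (m / 2) * wt p ^ (-(m / 2))) ^ 2 ≤ 16 ^ M * Real.exp (-m * τ) := by
  have hn := nq_nonneg (Am τ p)
  have hw := wt_pos p
  rw [mul_pow, wt_neg_sq, ← Real.rpow_natCast, ← Real.rpow_mul hn]
  rw [show m / 2 * ((2 : ℕ) : ℝ) = m by push_cast; ring]
  calc nq (Am τ p) ^ m * wt p ^ (-m)
      ≤ (16 * Real.exp (-τ) * wt p) ^ m * wt p ^ (-m) := by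
        gcongr
        exact nq_Am τ hτ p
    _ = 16 ^ m * Real.exp (-m * τ) := by
        rw [Real.mul_rpow (by positivity) hw.le, Real.mul_rpow (by norm_num) (Real.exp_pos _).le,
          ← Real.exp_mul, mul_assoc, ← Real.rpow_add hw, add_neg_cancel, Real.rpow_zero, mul_one]
        congr 2; ring
    _ ≤ _ := by
        gcongr
        norm_num

lemma s3_sq {m t τ : ℝ} (hτ : 0 ≤ τ) (ht : 0 ≤ t) (ht' : t ≤ 1 / 2) (hm : 2 + 2 * t ≤ m)
    (p : ℝ × ℝ) :
    (nq (Am τ p) ^ t * wt p ^ (-(m / 2))) ^ 2 ≤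
      (16 * Real.exp (-t * τ) ^ 2) * wt p ^ (-2 : ℝ) := by
  have hn := nq_nonneg (Am τ p)
  have hw := wt_pos p
  rw [mul_pow, wt_neg_sq, ← Real.rpow_natCast, ← Real.rpow_mul hn]
  rw [show t * ((2 : ℕ) : ℝ) = 2 * t by push_cast; ring]
  calc nq (Am τ p) ^ (2 * t) * wt p ^ (-m)
      ≤ (16 * Real.exp (-τ) * wt p) ^ (2 * t) * wt p ^ (-m) := by
        gcongr
        exact nq_Am τ hτ p
    _ = 16 ^ (2 * t) * Real.exp (-t * τ) ^ 2 * wt p ^ (2 * t - m) := by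
        rw [Real.mul_rpow (by positivity) hw.le, Real.mul_rpow (by norm_num) (Real.exp_pos _).le,
          ← Real.exp_mul, mul_assoc, ← Real.rpow_add hw, ← Real.exp_nat_mul]
        congr 3
        push_cast; ring
    _ ≤ 16 ^ (1 : ℝ) * Real.exp (-t * τ) ^ 2 * wt p ^ (-2 : ℝ) := by
        gcongr
        · norm_num
        · linarith
        · exact one_le_wt p
        · linarith
    _ = _ := by rw [Real.rpow_one]

lemma exp_neg_one_lt_half {τ : ℝ} (hτ : 1 ≤ τ) : Real.exp (-τ) ≤ 1 / 2 := by
  have h := Real.add_one_le_exp τ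
  rw [Real.exp_neg, ← one_div]
  apply one_div_le_one_div_of_le (by norm_num)
  linarith

lemma inv_sq_le {τ : ℝ} (hτ : 1 ≤ τ) : ((1 - Real.exp (-τ)) ^ 2)⁻¹ ≤ 4 := by
  have h := exp_neg_one_lt_half hτ
  rw [show (4 : ℝ) = ((1 / 2) ^ 2)⁻¹ by norm_num]
  apply inv_anti₀ (by norm_num)
  gcongr
  linarith

lemma term2_bound {m M τ : ℝ} (hτ : 0 < τ) (h0 : 0 ≤ m) (hM : m ≤ M)
    (g : ℝ × ℝ → ℝ≥0∞) (hg : Measurable g) :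
    N2 (fun P => ∫⁻ p, ENNReal.ofReal (Hf (1 - Real.exp (-τ)) (P - Am τ p)) *
      ENNReal.ofReal (nq (Am τ p) ^ (m / 2) * wt p ^ (-(m / 2))) * g p) ≤
      ENNReal.ofReal (4 ^ M * (40 * Real.pi) * Real.exp ((1 - m / 2) * τ)) * N2 g := by
  obtain ⟨J, hJ0, hJ⟩ := exists_J
  have hb : 0 < 1 - Real.exp (-τ) := by
    have : Real.exp (-τ) < 1 := by simpa using hτ
    linarith
  refine schur_conv hJ0 hJ hb (S1 := 16 ^ M * Real.exp (-m * τ)) (S2 := 0) (by positivity) le_rfl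
    (by positivity) _ ?_ (fun p => ?_) (fun p => ?_) (le_of_eq ?_) g hg
  · exact ((continuous_nq.comp (continuous_Am τ)).measurable.pow_const _).mul
      (continuous_wt.measurable.pow_const _)
  · exact mul_nonneg (Real.rpow_nonneg (nq_nonneg _) _) (Real.rpow_nonneg (wt_pos p).le _)
  · rw [zero_mul, add_zero]; exact s2_sq hτ.le h0 hM p
  · have e1 : (16 : ℝ) ^ M = (4 ^ M) ^ 2 := by
      rw [← Real.rpow_natCast, ← Real.rpow_mul (by norm_num), mul_comm, Real.rpow_mul (by norm_num)]
      norm_num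
    have e2 : Real.exp ((1 - m / 2) * τ) ^ 2 = Real.exp (-m * τ) * Real.exp (2 * τ) := by
      rw [← Real.exp_nat_mul, ← Real.exp_add]; congr 1; push_cast; ring
    rw [mul_pow, e2, e1]; ring

lemma master1 (M : ℝ) : ∃ C : ℝ, 0 < C ∧ ∀ τ : ℝ, 0 < τ → ∀ m : ℝ, 0 ≤ m → m ≤ M →
    (m ≤ 2 ∨ τ ≤ 1) → ∀ v : ℝ × ℝ → ℝ, Continuous v →
    N2 (fun P => ENNReal.ofReal (wt P ^ (m / 2) *
      |∫ p, Kf (Real.exp (-τ)) (P - Am τ p) * v p|)) ≤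
      ENNReal.ofReal (C * Real.exp ((1 - m / 2) * τ)) *
        N2 (fun p => ENNReal.ofReal (wt p ^ (m / 2) * |v p|)) := by
  obtain ⟨J, hJ0, hJ⟩ := exists_J
  obtain ⟨C, hC, hK⟩ := kernel_bound1 (M / 2)
  set R1 := (Real.exp M * (40 * Real.pi) + 4 * J) * (40 * Real.pi) + 1 with hR1
  have hR1p : 0 < R1 := by positivity
  set R2 := (4 : ℝ) ^ M * (40 * Real.pi) with hR2
  have hR2p : 0 < R2 := by positivity
  refine ⟨C * (R1 + R2), by positivity, fun τ hτ m h0 hM hcase v hv => ?_⟩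
  have ha1 : Real.exp (-τ) < 1 := by simpa using hτ
  have hb : 0 < 1 - Real.exp (-τ) := by linarith
  set E := Real.exp ((1 - m / 2) * τ) with hE
  have hE0 : 0 < E := Real.exp_pos _
  have hE2 : E ^ 2 = Real.exp (-m * τ) * Real.exp (2 * τ) := by
    rw [hE, ← Real.exp_nat_mul, ← Real.exp_add]; congr 1; push_cast; ring
  have hE3 : E ^ 2 = Real.exp ((2 - m) * τ) := by
    rw [hE, ← Real.exp_nat_mul]; congr 1; push_cast; ring
  set g : ℝ × ℝ → ℝ≥0∞ := fun p => ENNReal.ofReal (wt p ^ (m / 2) * |v p|) with hgdef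
  have hwm : ∀ r : ℝ, Measurable fun p : ℝ × ℝ => wt p ^ r :=
    fun r => continuous_wt.measurable.pow_const _
  have hg : Measurable g := ((hwm _).mul hv.abs.measurable).ennreal_ofReal
  have hs1 : Measurable fun p : ℝ × ℝ => wt p ^ (-(m / 2)) := hwm _
  have hs2 : Measurable fun p : ℝ × ℝ => nq (Am τ p) ^ (m / 2) * wt p ^ (-(m / 2)) :=
    ((continuous_nq.comp (continuous_Am τ)).measurable.pow_const _).mul (hwm _)
  -- first term
  have T1 : N2 (fun P => ∫⁻ p, ENNReal.ofReal (Hf (1 - Real.exp (-τ)) (P - Am τ p)) *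
      ENNReal.ofReal (wt p ^ (-(m / 2))) * g p) ≤ ENNReal.ofReal (R1 * E) * N2 g := by
    have hx : ∀ x y : ℝ, 0 ≤ x → x ≤ y → x * E ^ 2 ≤ ((y + 1) * E) ^ 2 := by
      intro x y hx hxy
      rw [mul_pow]
      gcongr
      nlinarith
    have hX : ∀ S1 S2 : ℝ, 0 ≤ S1 → 0 ≤ S2 → S1 ≤ Real.exp M * Real.exp (-m * τ) →
        ((1 - Real.exp (-τ)) ^ 2)⁻¹ * S2 ≤ 4 * E ^ 2 →
        (S1 * (Real.exp (2 * τ) * (40 * Real.pi)) + ((1 - Real.exp (-τ)) ^ 2)⁻¹ * S2 * J) *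
          (40 * Real.pi) ≤ (R1 * E) ^ 2 := by
      intro S1 S2 h1 h2 h3 h4
      calc _ ≤ (Real.exp M * Real.exp (-m * τ) * (Real.exp (2 * τ) * (40 * Real.pi)) +
            4 * E ^ 2 * J) * (40 * Real.pi) := by gcongr
        _ = ((Real.exp M * (40 * Real.pi) + 4 * J) * (40 * Real.pi)) * E ^ 2 := by
            have : Real.exp M * Real.exp (-m * τ) * (Real.exp (2 * τ) * (40 * Real.pi)) =
              Real.exp M * (40 * Real.pi) * E ^ 2 := by rw [hE2]; ring
            rw [this]; ring
        _ ≤ _ := hx _ _ (by positivity) le_rfl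
    by_cases hτ1 : τ ≤ 1
    · refine schur_conv hJ0 hJ hb (S1 := Real.exp M * Real.exp (-m * τ)) (S2 := 0) (by positivity)
        le_rfl (by positivity) _ hs1 (fun p => Real.rpow_nonneg (wt_pos p).le _) (fun p => ?_)
        (hX _ _ (by positivity) le_rfl le_rfl ?_) g hg
      · rw [wt_neg_sq, zero_mul, add_zero, ← Real.exp_add]
        refine (Real.rpow_le_one_of_one_le_of_nonpos (one_le_wt p) (by linarith)).trans ?_
        apply Real.one_le_exp
        nlinarith
      · rw [mul_zero]; positivity
    · have hτ2 : 1 ≤ τ := by linarith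
      have hm2 : m ≤ 2 := hcase.resolve_right hτ1
      refine schur_conv hJ0 hJ hb (S1 := Real.exp (-m * τ)) (S2 := Real.exp ((2 - m) * τ))
        (by positivity) (by positivity) (by positivity) _ hs1
        (fun p => Real.rpow_nonneg (wt_pos p).le _) (fun p => ?_)
        (hX _ _ (by positivity) (by positivity) ?_ ?_) g hg
      · rw [wt_neg_sq]; exact wt_interp h0 hm2 p
      · exact le_mul_of_one_le_left (by positivity) (Real.one_le_exp (h0.trans hM))
      · rw [hE3]; gcongr; exact inv_sq_le hτ2
  have T2 := term2_bound hτ h0 hM g hg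
  rw [← hR2, ← hE] at T2
  have hpt : ∀ P, ENNReal.ofReal (wt P ^ (m / 2) *
      |∫ p, Kf (Real.exp (-τ)) (P - Am τ p) * v p|) ≤ ENNReal.ofReal C *
      ((∫⁻ p, ENNReal.ofReal (Hf (1 - Real.exp (-τ)) (P - Am τ p)) *
      ENNReal.ofReal (wt p ^ (-(m / 2))) * g p) +
      ∫⁻ p, ENNReal.ofReal (Hf (1 - Real.exp (-τ)) (P - Am τ p)) *
      ENNReal.ofReal (nq (Am τ p) ^ (m / 2) * wt p ^ (-(m / 2))) * g p) := by
    intro P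
    refine (ofReal_mul_abs_integral_le _ (Real.rpow_nonneg (wt_pos P).le _) _).trans ?_
    rw [← lintegral_add_left (by fun_prop), ← lintegral_const_mul' _ _ ENNReal.ofReal_ne_top]
    refine lintegral_mono fun p => ?_
    have hH := Hf_nonneg (1 - Real.exp (-τ)) (P - Am τ p)
    have hw1 : 0 ≤ wt p ^ (-(m / 2)) := Real.rpow_nonneg (wt_pos p).le _
    have hw2 : 0 ≤ wt p ^ (m / 2) := Real.rpow_nonneg (wt_pos p).le _
    have hn : 0 ≤ nq (Am τ p) ^ (m / 2) := Real.rpow_nonneg (nq_nonneg _) _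
    have hww : wt p ^ (-(m / 2)) * wt p ^ (m / 2) = 1 := by
      rw [← Real.rpow_add (wt_pos p), neg_add_cancel, Real.rpow_zero]
    have hvp := abs_nonneg (v p)
    simp only [hgdef]
    rw [← ENNReal.ofReal_mul hH, ← ENNReal.ofReal_mul hH, ← ENNReal.ofReal_mul (by positivity),
      ← ENNReal.ofReal_mul (by positivity), ← ENNReal.ofReal_add (by positivity) (by positivity),
      ← ENNReal.ofReal_mul hC.le]
    apply ENNReal.ofReal_le_ofReal
    have hk := hK (Real.exp (-τ)) (m / 2) (Real.exp_pos _).le ha1 (by linarith) (by linarith) P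
      (Am τ p)
    rw [abs_mul, abs_of_nonneg (Kf_nonneg _ _), ← mul_assoc]
    refine (mul_le_mul_of_nonneg_right hk hvp).trans (le_of_eq ?_)
    calc _ = C * (Hf (1 - Real.exp (-τ)) (P - Am τ p) + nq (Am τ p) ^ (m / 2) *
          Hf (1 - Real.exp (-τ)) (P - Am τ p)) * |v p| * 1 := by ring
      _ = _ := by rw [← hww]; ring
  refine (N2_mono hpt).trans ?_
  have m1 := measurable_term (b := 1 - Real.exp (-τ)) (τ := τ) hs1 hg
  have m2 := measurable_term (b := 1 - Real.exp (-τ)) (τ := τ) hs2 hg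
  refine (le_of_eq (N2_const_mul (ENNReal.ofReal C) (m1.add m2))).trans ?_
  calc _ ≤ ENNReal.ofReal C * (ENNReal.ofReal (R1 * E) * N2 g + ENNReal.ofReal (R2 * E) * N2 g) := by
        gcongr
        exact (N2_add m1 m2).trans (add_le_add T1 T2)
    _ = _ := by
        rw [← add_mul, ← ENNReal.ofReal_add (by positivity) (by positivity), ← mul_assoc,
          ← ENNReal.ofReal_mul hC.le]
        congr 2; ring

lemma integrable_Kf_mul {τ : ℝ} (hτ : 0 < τ) (P : ℝ × ℝ) {v : ℝ × ℝ → ℝ} (hv : Integrable v) :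
    Integrable fun p => Kf (Real.exp (-τ)) (P - Am τ p) * v p := by
  have ha1 : Real.exp (-τ) < 1 := by simpa using hτ
  have hb : 0 < 1 - Real.exp (-τ) := by linarith
  obtain ⟨C, hC, h⟩ := K_wt 0
  refine hv.bdd_mul (c := C * ((1 - Real.exp (-τ)) ^ 2)⁻¹) (by fun_prop) (ae_of_all _ fun p => ?_)
  have := h _ 0 (Real.exp_pos (-τ)).le ha1 le_rfl le_rfl (P - Am τ p)
  rw [Real.rpow_zero, one_mul] at this
  rw [Real.norm_eq_abs, abs_of_nonneg (Kf_nonneg _ _)]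
  exact this.trans (mul_le_mul_of_nonneg_left (Hf_le _ hb _) hC.le)

lemma master2 (M : ℝ) : ∃ C : ℝ, 0 < C ∧ ∀ τ : ℝ, 1 ≤ τ → ∀ m t : ℝ, 0 ≤ t → t ≤ 1 / 2 →
    2 + 2 * t ≤ m → m ≤ M → ∀ v : ℝ × ℝ → ℝ, Continuous v → Integrable v → ∫ p, v p = 0 →
    N2 (fun P => ENNReal.ofReal (wt P ^ (m / 2) *
      |∫ p, Kf (Real.exp (-τ)) (P - Am τ p) * v p|)) ≤
      ENNReal.ofReal (C * Real.exp (-t * τ)) *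
        N2 (fun p => ENNReal.ofReal (wt p ^ (m / 2) * |v p|)) := by
  obtain ⟨J, hJ0, hJ⟩ := exists_J
  obtain ⟨C, hC, hK⟩ := kernel_bound2 (M / 2)
  set R1 := 4 * 16 * J * (40 * Real.pi) + 1 with hR1
  have hR1p : 0 < R1 := by positivity
  set R2 := (4 : ℝ) ^ M * (40 * Real.pi) with hR2
  have hR2p : 0 < R2 := by positivity
  refine ⟨C * (R1 + R1 + R2), by positivity, fun τ hτ1 m t ht ht' hmt hM v hv hvi hv0 => ?_⟩
  have hτ : 0 < τ := by linarith
  have h0 : 0 ≤ m := by linarith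
  have ha1 : Real.exp (-τ) < 1 := by simpa using hτ
  have ha2 := exp_neg_one_lt_half hτ1
  have hb : 0 < 1 - Real.exp (-τ) := by linarith
  set E := Real.exp (-t * τ) with hE
  have hE0 : 0 < E := Real.exp_pos _
  set g : ℝ × ℝ → ℝ≥0∞ := fun p => ENNReal.ofReal (wt p ^ (m / 2) * |v p|) with hgdef
  have hwm : ∀ r : ℝ, Measurable fun p : ℝ × ℝ => wt p ^ r :=
    fun r => continuous_wt.measurable.pow_const _
  have hg : Measurable g := ((hwm _).mul hv.abs.measurable).ennreal_ofReal
  have hs2 : Measurable fun p : ℝ × ℝ => nq (Am τ p) ^ (m / 2) * wt p ^ (-(m / 2)) :=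
    ((continuous_nq.comp (continuous_Am τ)).measurable.pow_const _).mul (hwm _)
  have hs3 : Measurable fun p : ℝ × ℝ => nq (Am τ p) ^ t * wt p ^ (-(m / 2)) :=
    ((continuous_nq.comp (continuous_Am τ)).measurable.pow_const _).mul (hwm _)
  have hs30 : ∀ p : ℝ × ℝ, 0 ≤ nq (Am τ p) ^ t * wt p ^ (-(m / 2)) := fun p =>
    mul_nonneg (Real.rpow_nonneg (nq_nonneg _) _) (Real.rpow_nonneg (wt_pos p).le _)
  have hAB : (((1 - Real.exp (-τ)) ^ 2)⁻¹ * (16 * E ^ 2) * J) * (40 * Real.pi) ≤ (R1 * E) ^ 2 := by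
    have h4 := inv_sq_le hτ1
    calc _ ≤ (4 * (16 * E ^ 2) * J) * (40 * Real.pi) := by gcongr
      _ = (4 * 16 * J * (40 * Real.pi)) * E ^ 2 := by ring
      _ ≤ _ := by
        rw [mul_pow]
        have : 0 < 4 * 16 * J * (40 * Real.pi) := by positivity
        gcongr
        nlinarith
  have T1 : N2 (fun P => ∫⁻ p, ENNReal.ofReal (Hf (1 - Real.exp (-τ)) (P - Am τ p)) *
      ENNReal.ofReal (nq (Am τ p) ^ t * wt p ^ (-(m / 2))) * g p) ≤
      ENNReal.ofReal (R1 * E) * N2 g := by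
    refine schur_conv hJ0 hJ hb (S1 := 0) (S2 := 16 * E ^ 2) le_rfl (by positivity) (by positivity)
      _ hs3 hs30 (fun p => ?_) ?_ g hg
    · rw [zero_add]; exact s3_sq hτ.le ht ht' hmt p
    · rw [zero_mul, zero_add]; exact hAB
  have T3 : N2 (fun P => ∫⁻ p, ENNReal.ofReal (Hf (1 - Real.exp (-τ)) P) *
      ENNReal.ofReal (nq (Am τ p) ^ t * wt p ^ (-(m / 2))) * g p) ≤
      ENNReal.ofReal (R1 * E) * N2 g :=
    schur_rank hJ0 hJ hb (S2 := 16 * E ^ 2) (by positivity) (by positivity)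
      _ hs3 hs30 (fun p => s3_sq hτ.le ht ht' hmt p) hAB g hg
  have T2 : N2 (fun P => ∫⁻ p, ENNReal.ofReal (Hf (1 - Real.exp (-τ)) (P - Am τ p)) *
      ENNReal.ofReal (nq (Am τ p) ^ (m / 2) * wt p ^ (-(m / 2))) * g p) ≤
      ENNReal.ofReal (R2 * E) * N2 g := by
    refine (term2_bound hτ h0 hM g hg).trans ?_
    have hle : Real.exp ((1 - m / 2) * τ) ≤ E := by
      rw [hE]
      apply Real.exp_le_exp.2
      nlinarith
    gcongr
  have hpt : ∀ P, ENNReal.ofReal (wt P ^ (m / 2) *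
      |∫ p, Kf (Real.exp (-τ)) (P - Am τ p) * v p|) ≤ ENNReal.ofReal C *
      ((∫⁻ p, ENNReal.ofReal (Hf (1 - Real.exp (-τ)) (P - Am τ p)) *
      ENNReal.ofReal (nq (Am τ p) ^ t * wt p ^ (-(m / 2))) * g p) +
      (∫⁻ p, ENNReal.ofReal (Hf (1 - Real.exp (-τ)) P) *
      ENNReal.ofReal (nq (Am τ p) ^ t * wt p ^ (-(m / 2))) * g p) +
      ∫⁻ p, ENNReal.ofReal (Hf (1 - Real.exp (-τ)) (P - Am τ p)) *
      ENNReal.ofReal (nq (Am τ p) ^ (m / 2) * wt p ^ (-(m / 2))) * g p) := by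
    intro P
    have hsub : ∫ p, Kf (Real.exp (-τ)) (P - Am τ p) * v p =
        ∫ p, (Kf (Real.exp (-τ)) (P - Am τ p) - Kf (Real.exp (-τ)) P) * v p := by
      simp only [sub_mul]
      rw [integral_sub (integrable_Kf_mul hτ P hvi) (hvi.const_mul _), integral_const_mul, hv0,
        mul_zero, sub_zero]
    rw [hsub]
    refine (ofReal_mul_abs_integral_le _ (Real.rpow_nonneg (wt_pos P).le _) _).trans ?_
    rw [← lintegral_add_left (by fun_prop), ← lintegral_add_left (by fun_prop),
      ← lintegral_const_mul' _ _ ENNReal.ofReal_ne_top]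
    refine lintegral_mono fun p => ?_
    have hH := Hf_nonneg (1 - Real.exp (-τ)) (P - Am τ p)
    have hH' := Hf_nonneg (1 - Real.exp (-τ)) P
    have hw1 : 0 ≤ wt p ^ (-(m / 2)) := Real.rpow_nonneg (wt_pos p).le _
    have hw2 : 0 ≤ wt p ^ (m / 2) := Real.rpow_nonneg (wt_pos p).le _
    have hn : 0 ≤ nq (Am τ p) ^ (m / 2) := Real.rpow_nonneg (nq_nonneg _) _
    have hn' : 0 ≤ nq (Am τ p) ^ t := Real.rpow_nonneg (nq_nonneg _) _
    have hww : wt p ^ (-(m / 2)) * wt p ^ (m / 2) = 1 := by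
      rw [← Real.rpow_add (wt_pos p), neg_add_cancel, Real.rpow_zero]
    have hvp := abs_nonneg (v p)
    simp only [hgdef]
    rw [← ENNReal.ofReal_mul hH, ← ENNReal.ofReal_mul hH', ← ENNReal.ofReal_mul hH,
      ← ENNReal.ofReal_mul (by positivity),
      ← ENNReal.ofReal_mul (by positivity), ← ENNReal.ofReal_mul (by positivity),
      ← ENNReal.ofReal_add (by positivity) (by positivity),
      ← ENNReal.ofReal_add (by positivity) (by positivity),
      ← ENNReal.ofReal_mul hC.le]
    apply ENNReal.ofReal_le_ofReal
    have hk := hK (Real.exp (-τ)) (m / 2) t (Real.exp_pos _).le ha2 (by linarith) (by linarith)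
      ht ht' P (Am τ p)
    rw [abs_mul, ← mul_assoc]
    refine (mul_le_mul_of_nonneg_right hk hvp).trans (le_of_eq ?_)
    calc _ = C * (nq (Am τ p) ^ t * Hf (1 - Real.exp (-τ)) (P - Am τ p) +
          nq (Am τ p) ^ t * Hf (1 - Real.exp (-τ)) P + nq (Am τ p) ^ (m / 2) *
          Hf (1 - Real.exp (-τ)) (P - Am τ p)) * |v p| * 1 := by ring
      _ = _ := by rw [← hww]; ring
  refine (N2_mono hpt).trans ?_
  have m1 := measurable_term (b := 1 - Real.exp (-τ)) (τ := τ) hs3 hg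
  have m2 := measurable_term (b := 1 - Real.exp (-τ)) (τ := τ) hs2 hg
  have m3 := measurable_term' (b := 1 - Real.exp (-τ)) hs3 hg
  refine (le_of_eq (N2_const_mul (ENNReal.ofReal C) ((m1.add m3).add m2))).trans ?_
  calc _ ≤ ENNReal.ofReal C * (ENNReal.ofReal (R1 * E) * N2 g + ENNReal.ofReal (R1 * E) * N2 g +
          ENNReal.ofReal (R2 * E) * N2 g) := by
        gcongr
        exact (N2_add (m1.add m3) m2).trans (add_le_add ((N2_add m1 m3).trans
          (add_le_add T1 T3)) T2)
    _ = _ := by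
        rw [← add_mul, ← add_mul, ← ENNReal.ofReal_add (by positivity) (by positivity),
          ← ENNReal.ofReal_add (by positivity) (by positivity), ← mul_assoc,
          ← ENNReal.ofReal_mul hC.le]
        congr 2; ring

/-! ### Conclusion -/

lemma semigroup_pos {τ : ℝ} (hτ : 0 < τ) (u₀ : 𝓢(ℝ × ℝ, ℝ)) (P : ℝ × ℝ) :
    semigroupLinfty τ u₀ P =
      ((∫ p : ℝ × ℝ, Kf (Real.exp (-τ)) (P - Am τ p) * u₀ p : ℝ) : ℂ) :=
  repr_kernel hτ (fun p => u₀ p) u₀.integrable P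

lemma integral_gauss2 : ∫ p, gauss2 p = 1 := by
  have h := ft2_gauss2 0 0
  rw [ft2] at h
  simp only [mul_zero, add_zero, Complex.ofReal_zero, Complex.exp_zero, mul_one] at h
  rw [integral_complex_ofReal] at h
  have := Complex.ofReal_injective h
  simpa using this

lemma continuous_gauss2 : Continuous gauss2 := by unfold gauss2; fun_prop

lemma main_diff (M : ℝ) : ∃ C : ℝ, 0 < C ∧ ∀ u₀ : 𝓢(ℝ × ℝ, ℝ), ∀ τ : ℝ, 0 ≤ τ → ∀ m t : ℝ,
    0 ≤ t → t ≤ 1 / 2 → 2 + 2 * t ≤ m → m ≤ M →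
        wnorm m (fun P => semigroupLinfty τ u₀ P -
            (((∫ p : ℝ × ℝ, u₀ p) * gauss2 P : ℝ) : ℂ)) ≤
          ENNReal.ofReal (C * Real.exp (-t * τ)) *
            wnorm m (fun P => u₀ P - (∫ p : ℝ × ℝ, u₀ p) * gauss2 P) := by
  obtain ⟨C1, hC1, h1⟩ := master1 M
  obtain ⟨C2, hC2, h2⟩ := master2 M
  refine ⟨C1 + C2 + 1, by positivity, fun u₀ τ hτ m t ht ht' hmt hM => ?_⟩
  set I := ∫ p : ℝ × ℝ, u₀ p with hI
  set v : ℝ × ℝ → ℝ := fun P => u₀ P - I * gauss2 P with hv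
  have hvc : Continuous v := u₀.continuous.sub (continuous_gauss2.const_mul I)
  have hvi : Integrable v := u₀.integrable.sub (integrable_gauss2.const_mul I)
  have hv0 : ∫ p, v p = 0 := by
    rw [hv, integral_sub u₀.integrable (integrable_gauss2.const_mul I), integral_const_mul,
      integral_gauss2, mul_one, hI, sub_self]
  rw [wnorm_eq, wnorm_eq]
  simp only [Real.norm_eq_abs]
  have hE := Real.exp_pos (-t * τ)
  rcases hτ.eq_or_lt with rfl | hτ
  · have : ∀ P, ‖semigroupLinfty 0 u₀ P - ((I * gauss2 P : ℝ) : ℂ)‖ = |v P| := fun P => by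
      rw [semigroup_zero, ← Complex.ofReal_sub, Complex.norm_real, Real.norm_eq_abs]
    simp only [this, mul_zero, Real.exp_zero, mul_one]
    apply le_mul_of_one_le_left zero_le
    rw [ENNReal.one_le_ofReal]; linarith
  · have : ∀ P, ‖semigroupLinfty τ u₀ P - ((I * gauss2 P : ℝ) : ℂ)‖ =
        |∫ p, Kf (Real.exp (-τ)) (P - Am τ p) * v p| := fun P => by
      rw [semigroup_pos hτ, ← Complex.ofReal_sub, Complex.norm_real, Real.norm_eq_abs]
      congr 1
      have e : ∀ p, Kf (Real.exp (-τ)) (P - Am τ p) * v p =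
          Kf (Real.exp (-τ)) (P - Am τ p) * u₀ p -
            I * (Kf (Real.exp (-τ)) (P - Am τ p) * gauss2 p) := fun p => by rw [hv]; ring
      simp only [e]
      rw [integral_sub (integrable_Kf_mul hτ P u₀.integrable)
        ((integrable_Kf_mul hτ P integrable_gauss2).const_mul I), integral_const_mul,
        kernel_gauss2 hτ]
    simp only [this]
    rcases le_total τ 1 with hτ1 | hτ1
    · refine (h1 τ hτ m (by linarith) hM (Or.inr hτ1) v hvc).trans ?_
      gcongr
      · linarith
      · linarith
    · refine (h2 τ hτ1 m t ht ht' hmt hM v hvc hvi hv0).trans ?_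
      gcongr
      linarith

/-- Proposition 4.1: decay estimates for the semigroup `e^{τ L_∞}` in weighted spaces
`L²(m)`, with `M(u₀) = ∫ u₀` and Gaussian `G`:
(i) `‖e^{τL_∞} u₀‖_{L²(m)} ≤ C e^{(1 - m/2)τ} ‖u₀‖_{L²(m)}` for `0 ≤ m ≤ 2`;
(ii) `‖e^{τL_∞} u₀ - M(u₀)G‖_{L²(m)} ≤ C e^{-(m-2)τ/2} ‖u₀ - M(u₀)G‖_{L²(m)}` for `2 ≤ m ≤ 3`;
(iii) `‖e^{τL_∞} u₀ - M(u₀)G‖_{L²(m)} ≤ C(m) e^{-τ/2} ‖u₀ - M(u₀)G‖_{L²(m)}` for `m ≥ 3`. -/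
theorem stmt_19 :
    (∃ C : ℝ, 0 < C ∧
      ∀ u₀ : 𝓢(ℝ × ℝ, ℝ), ∀ τ : ℝ, 0 ≤ τ → ∀ m : ℝ, 0 ≤ m → m ≤ 2 →
        wnorm m (semigroupLinfty τ u₀) ≤
          ENNReal.ofReal (C * Real.exp ((1 - m / 2) * τ)) * wnorm m (fun p => u₀ p)) ∧
    (∃ C : ℝ, 0 < C ∧
      ∀ u₀ : 𝓢(ℝ × ℝ, ℝ), ∀ τ : ℝ, 0 ≤ τ → ∀ m : ℝ, 2 ≤ m → m ≤ 3 →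
        wnorm m (fun P => semigroupLinfty τ u₀ P -
            (((∫ p : ℝ × ℝ, u₀ p) * gauss2 P : ℝ) : ℂ)) ≤
          ENNReal.ofReal (C * Real.exp (-(m - 2) / 2 * τ)) *
            wnorm m (fun P => u₀ P - (∫ p : ℝ × ℝ, u₀ p) * gauss2 P)) ∧
    (∀ m : ℝ, 3 ≤ m →
      ∃ C : ℝ, 0 < C ∧
        ∀ u₀ : 𝓢(ℝ × ℝ, ℝ), ∀ τ : ℝ, 0 ≤ τ →
          wnorm m (fun P => semigroupLinfty τ u₀ P -
              (((∫ p : ℝ × ℝ, u₀ p) * gauss2 P : ℝ) : ℂ)) ≤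
            ENNReal.ofReal (C * Real.exp (-τ / 2)) *
              wnorm m (fun P => u₀ P - (∫ p : ℝ × ℝ, u₀ p) * gauss2 P)) := by
  refine ⟨?_, ?_, ?_⟩
  · obtain ⟨C, hC, h⟩ := master1 2
    refine ⟨C + 1, by positivity, fun u₀ τ hτ m h0 h2 => ?_⟩
    rw [wnorm_eq, wnorm_eq]
    simp only [Real.norm_eq_abs]
    rcases hτ.eq_or_lt with rfl | hτ
    · simp only [semigroup_zero, Complex.norm_real, Real.norm_eq_abs, mul_zero, Real.exp_zero,
        mul_one]
      apply le_mul_of_one_le_left zero_le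
      rw [ENNReal.one_le_ofReal]; linarith
    · simp only [semigroup_pos hτ, Complex.norm_real, Real.norm_eq_abs]
      refine (h τ hτ m h0 h2 (Or.inl h2) (fun p => u₀ p) u₀.continuous).trans ?_
      gcongr
      linarith
  · obtain ⟨C, hC, h⟩ := main_diff 3
    refine ⟨C, hC, fun u₀ τ hτ m h2 h3 => ?_⟩
    rw [show -(m - 2) / 2 * τ = -((m - 2) / 2) * τ by ring]
    exact h u₀ τ hτ m ((m - 2) / 2) (by linarith) (by linarith) (by linarith) h3
  · intro m hm
    obtain ⟨C, hC, h⟩ := main_diff m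
    refine ⟨C, hC, fun u₀ τ hτ => ?_⟩
    rw [show -τ / 2 = -(1 / 2) * τ by ring]
    exact h u₀ τ hτ m (1 / 2) (by norm_num) le_rfl (by linarith) le_rfl
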